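/- Let (R, m) be a regular local ring of dimension n, I an ideal with R/I equidimensional of dimension d ≥ 2, and 1 ≤ i ≤ d−1. Suppose r ∈ m is such that if Supp_R H^{n−i}_I(R) ≠ {m}, then r lies in no minimal member of Supp_R H^{n−i}_I(R). Then dim Supp_R H^0_{(r)}(H^{n−i}_I(R)) ≤ max{0, i−2}. -/

import Mathlib

open IsLocalRing CategoryTheory

noncomputable section

universe u

open IsLocalRing
namespace SuppLC

lemma sup_pow_le {R : Type*} [CommRing R] (y : R) (n : Ideal R) (j : ℕ) :
    (Ideal.span {y} ⊔ n) ^ (j+1) ≤ Ideal.span {y} * (Ideal.span {y} ⊔ n)^j ⊔ n^(j+1) := by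
  induction j with
  | zero => simp
  | succ j ih =>
    rw [pow_succ' _ (j+1), Ideal.sup_mul]
    apply sup_le le_sup_left
    calc n * (Ideal.span {y} ⊔ n)^(j+1) ≤ n * (Ideal.span {y} * (Ideal.span {y} ⊔ n)^j ⊔ n^(j+1)) :=
          Ideal.mul_mono_right ih
      _ = Ideal.span {y} * (n * (Ideal.span {y} ⊔ n)^j) ⊔ n^(j+1+1) := by
          rw [Ideal.mul_sup, pow_succ' n (j+1)]; congr 1; ring
      _ ≤ _ := by
          apply sup_le_sup_right
          apply Ideal.mul_mono_right
          rw [pow_succ']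
          exact Ideal.mul_mono_left le_sup_right

/-- cancellability of parameters -/
def Good {R : Type*} [CommRing R] (b : Ideal R) (s : Set R) : Prop :=
  ∀ T ⊆ s, ∀ y ∈ s, y ∉ T → ∀ f, y * f ∈ b ⊔ Ideal.span T → f ∈ b ⊔ Ideal.span T

lemma Astep {R : Type*} [CommRing R] {b n' : Ideal R} {y : R} {j : ℕ}
    (hQ : ∀ f, y * f ∈ b ⊔ n' ^ (j+1) → f ∈ b ⊔ n' ^ (j+1)) {u : R}
    (hu : y * u ∈ b ⊔ (Ideal.span {y} ⊔ n') ^ (j+1)) : u ∈ b ⊔ (Ideal.span {y} ⊔ n') ^ j := by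
  have h1 : y * u ∈ b ⊔ (Ideal.span {y} * (Ideal.span {y} ⊔ n')^j ⊔ n'^(j+1)) :=
    (sup_le_sup_left (sup_pow_le y n' j) b) hu
  rw [← sup_assoc, sup_right_comm] at h1
  obtain ⟨w, hw, v', hv', h⟩ := Submodule.mem_sup.1 h1
  obtain ⟨v, hv, rfl⟩ := Ideal.mem_span_singleton_mul.1 hv'
  have h2 : u - v ∈ b ⊔ n' ^ (j+1) := hQ _ (by
    have : y * (u - v) = w := by linear_combination -h
    rwa [this])
  have h3 : b ⊔ n' ^ (j+1) ≤ b ⊔ (Ideal.span {y} ⊔ n') ^ j :=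
    sup_le_sup_left ((Ideal.pow_le_pow_right (Nat.le_succ j)).trans
      (Ideal.pow_right_mono le_sup_right j)) b
  have := add_mem (h3 h2) ((le_sup_right : _ ≤ b ⊔ (Ideal.span {y} ⊔ n') ^ j) hv)
  simpa using this

lemma Qlem {R : Type*} [CommRing R] (T : Finset R) : ∀ (b : Ideal R) (z : R), z ∉ T →
    Good b (insert z (T : Set R)) →
    ∀ (j : ℕ) (f : R), z * f ∈ b ⊔ Ideal.span (T : Set R) ^ j → f ∈ b ⊔ Ideal.span (T : Set R) ^ j := by
  classical
  induction T using Finset.induction_on with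
  | empty =>
    intro b z hz hg j f hf
    rcases j with _ | j
    · simp
    · have := hg ∅ (by simp) z (by simp) (by simp) f
      simp only [Finset.coe_empty, Ideal.span_empty, Submodule.bot_pow, ne_eq, Nat.add_eq_zero_iff, one_ne_zero, and_false, not_false_eq_true] at *
      simp at *
      exact this hf
  | insert y T' hy ih =>
    intro b z hz hg
    have hzy : z ≠ y := fun h => hz (by simp [h])
    have hzT : z ∉ T' := fun h => hz (by simp [h])
    have hg1 : Good b (insert y (T' : Set R)) := by
      intro T hT w hw hwT
      apply hg T (hT.trans _) w _ hwT
      · simp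
      · simp at hw ⊢; tauto
    have hg2 : Good (b ⊔ Ideal.span {y}) (insert z (T' : Set R)) := by
      intro T hT w hw hwT f hf
      have hwy : w ≠ y := by
        rintro rfl
        rcases hw with h | h
        · exact hzy h.symm
        · exact hy h
      have := hg (insert y T) (by
        apply Set.insert_subset (by simp)
        apply hT.trans
        simp [Set.insert_subset_insert]) w (by simp at hw ⊢; tauto) (by simp [hwT, hwy]) f
      rw [Ideal.span_insert, ← sup_assoc] at this
      exact this hf
    have e : Ideal.span ((insert y T' : Finset R) : Set R) = Ideal.span {y} ⊔ Ideal.span (T' : Set R) := by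
      rw [Finset.coe_insert, Ideal.span_insert]
    rw [e]
    set n' := Ideal.span (T' : Set R)
    intro j
    induction j with
    | zero => simp
    | succ j ihj =>
      intro f hf
      have hmono : n' ^ (j+1) ≤ (Ideal.span {y} ⊔ n') ^ (j+1) := Ideal.pow_right_mono le_sup_right _
      have h1 : z * f ∈ (b ⊔ Ideal.span {y}) ⊔ n' ^ (j+1) := by
        rw [sup_assoc]
        refine (sup_le_sup_left ((sup_pow_le y n' j).trans (sup_le_sup_right Ideal.mul_le_left _)) b) hf
      have h2 := ih _ z hzT hg2 (j+1) f h1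
      rw [sup_right_comm] at h2
      obtain ⟨w, hw, v', hv', h⟩ := Submodule.mem_sup.1 h2
      obtain ⟨v, rfl⟩ := Ideal.mem_span_singleton.1 hv'
      have hw' : w ∈ b ⊔ (Ideal.span {y} ⊔ n') ^ (j+1) := sup_le_sup_left hmono b hw
      have h3 : y * (z * v) ∈ b ⊔ (Ideal.span {y} ⊔ n') ^ (j+1) := by
        have : y * (z * v) = z * f - z * w := by linear_combination z * h
        rw [this]
        exact sub_mem hf (Ideal.mul_mem_left _ _ hw')
      have h4 := ihj _ (Astep (ih b y hy hg1 (j+1)) h3)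
      rw [← h]
      refine add_mem hw' ?_
      have h5 : y * v ∈ Ideal.span {y} * (b ⊔ (Ideal.span {y} ⊔ n') ^ j) :=
        Ideal.mul_mem_mul (Ideal.mem_span_singleton_self y) h4
      rw [Ideal.mul_sup] at h5
      have h6 : Ideal.span {y} * b ⊔ Ideal.span {y} * (Ideal.span {y} ⊔ n') ^ j ≤
          b ⊔ (Ideal.span {y} ⊔ n') ^ (j+1) := by
        refine sup_le_sup Ideal.mul_le_right ?_
        rw [pow_succ']
        exact Ideal.mul_mono_left le_sup_left
      exact h6 h5

section Reg
variable {S : Type*} [CommRing S]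

lemma exchange [IsLocalRing S] (s : Finset S) (hs : Ideal.span (s : Set S) = maximalIdeal S)
    {x : S} (hx : x ∈ maximalIdeal S) (hx2 : x ∉ maximalIdeal S ^ 2) :
    ∃ t : Finset S, x ∉ t ∧ t.card + 1 ≤ s.card ∧
      Ideal.span {x} ⊔ Ideal.span (t : Set S) = maximalIdeal S := by
  classical
  rw [← hs] at hx
  obtain ⟨a, ha⟩ := Submodule.mem_span_finset'.1 hx
  have : ∃ y : s, a y ∉ maximalIdeal S := by
    by_contra! hcon
    apply hx2
    rw [← ha]
    apply Ideal.sum_mem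
    intro y _
    rw [pow_two, smul_eq_mul]
    exact Ideal.mul_mem_mul (hcon y) (hs ▸ Ideal.subset_span y.2)
  obtain ⟨y, hy⟩ := this
  have hu : IsUnit (a y) := by simpa using hy
  obtain ⟨u, hu⟩ := hu
  refine ⟨(s.erase y).erase x, by simp, ?_, ?_⟩
  · have h1 := Finset.card_le_card ((s.erase (y : S)).erase_subset x)
    have := Finset.card_erase_add_one y.2
    omega
  · apply le_antisymm
    · apply sup_le
      · rw [Ideal.span_le, Set.singleton_subset_iff, ← hs]; exact hx
      · rw [← hs]; apply Ideal.span_mono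
        intro z hz; simp at hz ⊢; exact hz.1.1
    · rw [← hs, Ideal.span_le]
      have hxmem : x ∈ Ideal.span {x} ⊔ Ideal.span (((s.erase (y : S)).erase x : Finset S) : Set S) :=
        Ideal.mem_sup_left (Ideal.mem_span_singleton_self x)
      have key : ∀ z ∈ s, z ≠ (y : S) → z ∈ Ideal.span {x} ⊔ Ideal.span (((s.erase (y : S)).erase x : Finset S) : Set S) := by
        intro z hz hzy
        by_cases hzx : z = x
        · rw [hzx]; exact hxmem
        · exact Ideal.mem_sup_right (Ideal.subset_span (by simp [hz, hzy, hzx]))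
      intro z hz
      by_cases hzy : z = (y : S)
      · subst hzy
        have h1 : a y * (y : S) ∈ Ideal.span {x} ⊔ Ideal.span (((s.erase (y : S)).erase x : Finset S) : Set S) := by
          rw [← Finset.add_sum_erase _ _ (Finset.mem_univ y)] at ha
          have : a y * (y : S) = x - ∑ z ∈ Finset.univ.erase y, a z • (z : S) := by
            rw [← ha]; simp
          rw [this]
          refine sub_mem hxmem (Ideal.sum_mem _ ?_)
          intro z hz
          refine Ideal.mul_mem_left _ _ (key z z.2 ?_)
          simp at hz
          exact fun h => hz (Subtype.ext h)
        have := Ideal.mul_mem_left _ (↑u⁻¹ : S) h1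
        rw [← hu] at this
        simpa using this
      · exact key z hz hzy

lemma exists_gens [IsRegularLocalRing S] {N : ℕ} (hN : ringKrullDim S = N) :
    ∃ s : Finset S, Ideal.span (s : Set S) = maximalIdeal S ∧ s.card = N := by
  have h := IsRegularLocalRing.spanFinrank_maximalIdeal (R := S)
  rw [hN] at h
  obtain ⟨s, h1, h2⟩ := Submodule.FG.exists_span_finset_card_eq_spanFinrank
    (IsNoetherian.noetherian (maximalIdeal S))
  exact ⟨s, h2, by rw [h1]; exact_mod_cast h⟩

lemma reg_of_gens [IsLocalRing S] [IsNoetherianRing S] {N : ℕ} (hN : (N : WithBot ℕ∞) ≤ ringKrullDim S)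
    (s : Finset S) (hs : Ideal.span (s : Set S) = maximalIdeal S) (hc : s.card ≤ N) :
    IsRegularLocalRing S ∧ ringKrullDim S = N := by
  have h1 : (maximalIdeal S).spanFinrank ≤ s.card := by
    rw [← hs, ← Set.ncard_coe_finset]
    exact Submodule.spanFinrank_span_le_ncard_of_finite s.finite_toSet
  have h2 : ((maximalIdeal S).spanFinrank : WithBot ℕ∞) ≤ N := by exact_mod_cast h1.trans hc
  exact ⟨IsRegularLocalRing.of_spanFinrank_maximalIdeal_le _ (h2.trans hN),
    le_antisymm ((ringKrullDim_le_spanFinrank_maximalIdeal S).trans h2) hN⟩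

lemma exists_dim (S : Type*) [CommRing S] [IsLocalRing S] [IsNoetherianRing S] : ∃ N : ℕ, ringKrullDim S = N := by
  have h1 := ringKrullDim_lt_top (R := S)
  have h2 := ringKrullDim_nonneg_of_nontrivial (R := S)
  generalize ringKrullDim S = d at *
  induction d with
  | bot => simp at h2
  | coe d =>
    induction d with
    | top => simp at h1
    | coe d => exact ⟨d, rfl⟩

lemma isLocal_quot [IsLocalRing S] {J : Ideal S} (hJ : J ≤ maximalIdeal S) : IsLocalRing (S ⧸ J) := by
  have : Nontrivial (S ⧸ J) := Ideal.Quotient.nontrivial_iff.2 (fun h => by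
    rw [h, top_le_iff] at hJ
    exact (maximalIdeal.isMaximal S).ne_top hJ)
  exact IsLocalRing.of_surjective' _ Ideal.Quotient.mk_surjective

lemma max_quot [IsLocalRing S] (J : Ideal S) [IsLocalRing (S ⧸ J)] :
    maximalIdeal (S ⧸ J) = (maximalIdeal S).map (Ideal.Quotient.mk J) := by
  have h2 : maximalIdeal S = (maximalIdeal (S ⧸ J)).comap (Ideal.Quotient.mk J) := by
    have := Ideal.comap_isMaximal_of_surjective (Ideal.Quotient.mk J) Ideal.Quotient.mk_surjective
      (K := maximalIdeal (S ⧸ J))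
    exact (IsLocalRing.eq_maximalIdeal this).symm
  rw [h2, Ideal.map_comap_of_surjective _ Ideal.Quotient.mk_surjective]

lemma reg_quot [IsRegularLocalRing S] {N : ℕ} (hN : ringKrullDim S = (N + 1 : ℕ)) {x : S}
    (hx : x ∈ maximalIdeal S) (hx2 : x ∉ maximalIdeal S ^ 2) :
    IsRegularLocalRing (S ⧸ Ideal.span {x}) ∧ ringKrullDim (S ⧸ Ideal.span {x}) = N := by
  classical
  obtain ⟨s, hs, hc⟩ := exists_gens hN
  obtain ⟨t, -, ht1, ht2⟩ := exchange s hs hx hx2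
  have hle : Ideal.span {x} ≤ maximalIdeal S := by rw [← ht2]; exact le_sup_left
  have := isLocal_quot hle
  have hd : ringKrullDim S ≤ ringKrullDim (S ⧸ Ideal.span {x}) + 1 := by
    have := ringKrullDim_le_ringKrullDim_quotient_add_card (R := S) {x} (by
      simpa [← IsLocalRing.ringJacobson_eq_maximalIdeal] using hx)
    rw [Finset.coe_singleton] at this
    simpa using this
  refine reg_of_gens ?_ (t.image (Ideal.Quotient.mk (Ideal.span {x}))) ?_ ?_
  · obtain ⟨d, hd'⟩ := exists_dim (S ⧸ Ideal.span {x})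
    rw [hd', hN] at hd
    rw [hd']
    have : N + 1 ≤ d + 1 := by exact_mod_cast hd
    exact_mod_cast (by omega : N ≤ d)
  · rw [max_quot, ← ht2, Ideal.map_sup, Finset.coe_image, Ideal.map_span, Ideal.map_span]
    simp
  · exact Finset.card_image_le.trans (by omega)

/-- prime avoidance -/
lemma exists_avoid [IsLocalRing S] [IsNoetherianRing S] (A : Set (Ideal S)) (hA : A.Finite)
    (hAp : ∀ p ∈ A, p.IsPrime ∧ p ≠ maximalIdeal S) (hm : ¬ (maximalIdeal S ≤ maximalIdeal S ^ 2)) :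
    ∃ x ∈ maximalIdeal S, x ∉ maximalIdeal S ^ 2 ∧ ∀ p ∈ A, x ∉ p := by
  classical
  by_contra! hcon
  have hsub : (maximalIdeal S : Set S) ⊆ ⋃ i ∈ (↑(insert (maximalIdeal S ^2) hA.toFinset) : Set (Ideal S)), ((id i : Ideal S) : Set S) := by
    intro x hx
    simp only [Finset.coe_insert, Set.mem_iUnion]
    by_cases h : x ∈ maximalIdeal S ^ 2
    · exact ⟨_, by left; rfl, h⟩
    · obtain ⟨p, hp, hxp⟩ := hcon x hx h
      exact ⟨p, by right; simpa using hp, hxp⟩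
  have := (Ideal.subset_union_prime (s := insert (maximalIdeal S ^2) hA.toFinset) (f := id)
    (maximalIdeal S ^ 2) (maximalIdeal S ^ 2) (by
      intro p hp hne _
      rw [Finset.mem_insert] at hp
      exact (hAp p (by simpa using hp.resolve_left hne)).1)).1 hsub
  obtain ⟨p, hp, hle⟩ := this
  rw [Finset.mem_insert] at hp
  rcases hp with rfl | hp
  · exact hm hle
  · have h := hAp p (by simpa using hp)
    exact h.2 (((maximalIdeal.isMaximal S).eq_of_le h.1.ne_top hle).symm)

lemma not_le_sq [IsLocalRing S] [IsNoetherianRing S] (h : maximalIdeal S ≠ ⊥) :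
    ¬ (maximalIdeal S ≤ maximalIdeal S ^ 2) := by
  intro hle
  apply h
  apply Submodule.eq_bot_of_le_smul_of_le_jacobson_bot (maximalIdeal S) _ (IsNoetherian.noetherian _)
  · rw [smul_eq_mul, ← pow_two]; exact hle
  · rw [IsLocalRing.jacobson_eq_maximalIdeal _ bot_ne_top]

lemma max_eq_bot_of_dim_zero [IsRegularLocalRing S] (hN : ringKrullDim S = (0 : ℕ)) :
    maximalIdeal S = ⊥ := by
  obtain ⟨s, hs, hc⟩ := exists_gens hN
  rw [Finset.card_eq_zero] at hc
  rw [← hs, hc]; simp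

lemma max_ne_bot_of_dim_succ [IsLocalRing S] {N : ℕ} (hN : ringKrullDim S = (N + 1 : ℕ)) :
    maximalIdeal S ≠ ⊥ := by
  intro h
  have : IsField S := IsLocalRing.isField_iff_maximalIdeal_eq.2 h
  have := ringKrullDim_eq_zero_of_isField this
  rw [hN] at this
  have : N + 1 = 0 := by exact_mod_cast this
  omega

theorem reg_domain (N : ℕ) : ∀ (S : Type*) [CommRing S] [IsRegularLocalRing S],
    ringKrullDim S = N → IsDomain S := by
  induction N with
  | zero =>
    intro S _ _ h
    exact (IsLocalRing.isField_iff_maximalIdeal_eq.2 (max_eq_bot_of_dim_zero h)).isDomain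
  | succ N ih =>
    intro S _ _ h
    have hm := max_ne_bot_of_dim_succ h
    have hnm : ∀ p ∈ minimalPrimes S, p.IsPrime ∧ p ≠ maximalIdeal S := by
      intro p hp
      refine ⟨hp.1.1, ?_⟩
      rintro rfl
      have h1 := IsLocalRing.maximalIdeal_height_eq_ringKrullDim (R := S)
      have : (maximalIdeal S).height = 0 := by
        exact Ideal.height_eq_zero_iff.2 hp
      rw [this, h] at h1
      have : 0 = N + 1 := by exact_mod_cast h1
      omega
    obtain ⟨x, hx, hx2, hxp⟩ := exists_avoid (minimalPrimes S) (minimalPrimes.finite_of_isNoetherianRing S) hnm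
      (not_le_sq hm)
    obtain ⟨h1, h2⟩ := reg_quot h hx hx2
    have := ih _ h2
    have hprime : (Ideal.span {x}).IsPrime := (Ideal.Quotient.isDomain_iff_prime _).1 this
    obtain ⟨p, hp, hle⟩ := Ideal.exists_minimalPrimes_le (I := (⊥ : Ideal S)) (J := Ideal.span {x}) bot_le
    have hpp : p.IsPrime := hp.1.1
    have hb : p = ⊥ := by
      apply Submodule.eq_bot_of_le_smul_of_le_jacobson_bot (Ideal.span {x}) _ (IsNoetherian.noetherian _)
      · intro f hf
        obtain ⟨g, rfl⟩ := Ideal.mem_span_singleton.1 (hle hf)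
        have := (hpp.mem_or_mem hf).resolve_left (hxp p hp)
        rw [smul_eq_mul]
        exact Ideal.mul_mem_mul (Ideal.mem_span_singleton_self x) this
      · rw [IsLocalRing.jacobson_eq_maximalIdeal _ bot_ne_top, Ideal.span_le]
        simpa using hx
    subst hb
    exact (IsDomain.of_bot_isPrime S)

instance reg_isDomain [IsRegularLocalRing S] : IsDomain S := by
  obtain ⟨N, h⟩ := exists_dim S
  exact reg_domain N S h

end Reg
end SuppLC

open IsLocalRing
namespace SuppLC
section Reg
variable {S : Type*} [CommRing S]

lemma reg_quot_span [IsRegularLocalRing S] {N : ℕ} (hN : ringKrullDim S = N) (s : Finset S)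
    (hs : Ideal.span (s : Set S) = maximalIdeal S) (hc : s.card = N) (T : Finset S) (hT : T ⊆ s) :
    IsRegularLocalRing (S ⧸ Ideal.span (T : Set S)) ∧
      ringKrullDim (S ⧸ Ideal.span (T : Set S)) = (N - T.card : ℕ) := by
  classical
  have hle : Ideal.span (T : Set S) ≤ maximalIdeal S := by
    rw [← hs]; exact Ideal.span_mono (by exact_mod_cast hT)
  have := isLocal_quot hle
  have hd := ringKrullDim_le_ringKrullDim_quotient_add_card (R := S) T (by
      rw [IsLocalRing.ringJacobson_eq_maximalIdeal]
      exact Ideal.span_le.1 hle)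
  have hTc := Finset.card_le_card hT
  refine reg_of_gens ?_ ((s \ T).image (Ideal.Quotient.mk (Ideal.span (T : Set S)))) ?_ ?_
  · obtain ⟨d, hd'⟩ := exists_dim (S ⧸ Ideal.span (T : Set S))
    rw [hd', hN] at hd
    rw [hd']
    have : N ≤ d + T.card := by exact_mod_cast hd
    exact_mod_cast (by omega : N - T.card ≤ d)
  · rw [max_quot, ← hs]
    have : (s : Set S) = (T : Set S) ∪ ((s \ T : Finset S) : Set S) := by
      ext a; simp only [Set.mem_union, Finset.mem_coe, Finset.mem_sdiff]
      have := @hT a; tauto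
    conv_rhs => rw [this, Ideal.span_union, Ideal.map_sup]
    rw [Finset.coe_image, Ideal.map_span, Ideal.map_span]
    have h0 : Ideal.span ((Ideal.Quotient.mk (Ideal.span (T : Set S))) '' T) = ⊥ := by
      rw [← Ideal.map_span, Ideal.map_quotient_self]
    rw [h0, bot_sup_eq]
  · refine Finset.card_image_le.trans ?_
    rw [Finset.card_sdiff_of_subset hT]; omega

lemma reg_good [IsRegularLocalRing S] {N : ℕ} (hN : ringKrullDim S = N) (s : Finset S)
    (hs : Ideal.span (s : Set S) = maximalIdeal S) (hc : s.card = N) : Good ⊥ (s : Set S) := by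
  classical
  intro T hT y hy hyT f hf
  rw [bot_sup_eq] at *
  obtain ⟨T, rfl⟩ := (s.finite_toSet.subset hT).exists_finset_coe
  have hT' : T ⊆ s := by exact_mod_cast hT
  obtain ⟨h1, h2⟩ := reg_quot_span hN s hs hc T hT'
  have h3 : (Ideal.span (T : Set S)).IsPrime := (Ideal.Quotient.isDomain_iff_prime _).1 inferInstance
  refine (h3.mem_or_mem hf).resolve_left ?_
  intro hmem
  have hins : insert y T ⊆ s := Finset.insert_subset hy hT'
  obtain ⟨h4, h5⟩ := reg_quot_span hN s hs hc (insert y T) hins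
  have e : Ideal.span ((insert y T : Finset S) : Set S) = Ideal.span (T : Set S) := by
    rw [Finset.coe_insert, Ideal.span_insert, sup_eq_right, Ideal.span_le]; simpa using hmem
  rw [e, h2] at h5
  have hyT' : y ∉ T := by simpa using hyT
  have := Finset.card_le_card hins
  rw [Finset.card_insert_of_notMem hyT'] at h5 this
  have : N - T.card = N - (T.card + 1) := by exact_mod_cast h5
  omega

/-- a regular parameter cancels in the order filtration -/
lemma reg_Kstep [IsRegularLocalRing S] {x : S} (hx : x ∈ maximalIdeal S)
    (hx2 : x ∉ maximalIdeal S ^ 2) (j : ℕ) (h : S) (hxh : x * h ∈ maximalIdeal S ^ (j+1)) :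
    h ∈ maximalIdeal S ^ j := by
  classical
  obtain ⟨N, hN⟩ := exists_dim S
  obtain ⟨s, hs, hc⟩ := exists_gens hN
  obtain ⟨t, hxt, ht1, ht2⟩ := exchange s hs hx hx2
  have hsp : Ideal.span ((insert x t : Finset S) : Set S) = maximalIdeal S := by
    rw [Finset.coe_insert, Ideal.span_insert, ht2]
  have hcard : (insert x t).card = N := by
    apply le_antisymm
    · rw [Finset.card_insert_of_notMem hxt]; omega
    · have := reg_of_gens (N := min N (insert x t).card) (by rw [hN]; exact_mod_cast min_le_left _ _) (insert x t) hsp (by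
        rw [Finset.card_insert_of_notMem hxt]; omega)
      have h2 := this.2
      rw [hN] at h2
      have : N = min N (insert x t).card := by exact_mod_cast h2
      omega
  have hg := reg_good hN (insert x t) hsp hcard
  rw [Finset.coe_insert] at hg
  have := Astep (u := h) (j := j) (Qlem t ⊥ x hxt hg (j+1)) (by rw [ht2, bot_sup_eq]; exact hxh)
  rwa [ht2, bot_sup_eq] at this

/-- the order function of a regular local ring is multiplicative -/
theorem reg_ord (N : ℕ) : ∀ (S : Type*) [CommRing S] [IsRegularLocalRing S], ringKrullDim S = N →
    ∀ (c a b : ℕ) (f g : S), a + b = c → f ∉ maximalIdeal S ^ (a+1) → g ∉ maximalIdeal S ^ (b+1) →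
      f * g ∉ maximalIdeal S ^ (a+b+1) := by
  induction N with
  | zero =>
    intro S _ _ hN c a b f g hab hf hg hfg
    rw [max_eq_bot_of_dim_zero hN, Ideal.bot_pow (by omega), Ideal.mem_bot] at hf hg hfg
    rcases mul_eq_zero.1 hfg with h | h
    · exact hf h
    · exact hg h
  | succ N ih =>
    intro S _ _ hN c
    obtain ⟨x, hx, hx2, -⟩ := exists_avoid (S := S) ∅ (by simp) (by simp) (not_le_sq (max_ne_bot_of_dim_succ hN))
    obtain ⟨h1, h2⟩ := reg_quot hN hx hx2
    have key : ∀ (k : ℕ) (f : S), (Ideal.Quotient.mk (Ideal.span {x}) f) ∈ maximalIdeal (S ⧸ Ideal.span {x}) ^ k →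
        ∃ f' ∈ maximalIdeal S ^ k, ∃ h, f = f' + x * h := by
      intro k f hf
      rw [max_quot, ← Ideal.map_pow, Ideal.mem_map_iff_of_surjective _ Ideal.Quotient.mk_surjective] at hf
      obtain ⟨f', hf', he⟩ := hf
      rw [eq_comm, Ideal.Quotient.eq, Ideal.mem_span_singleton] at he
      obtain ⟨h, hh⟩ := he
      exact ⟨f', hf', h, by linear_combination hh⟩
    have key2 : ∀ (k : ℕ) (f : S), f ∈ maximalIdeal S ^ k → (Ideal.Quotient.mk (Ideal.span {x}) f) ∈ maximalIdeal (S ⧸ Ideal.span {x}) ^ k := by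
      intro k f hf
      rw [max_quot, ← Ideal.map_pow]
      exact Ideal.mem_map_of_mem _ hf
    induction c with
    | zero =>
      intro a b f g hab hf hg hfg
      obtain ⟨rfl, rfl⟩ : a = 0 ∧ b = 0 := by omega
      simp only [zero_add, pow_one] at *
      rcases (maximalIdeal.isMaximal S).isPrime.mem_or_mem hfg with h | h
      · exact hf h
      · exact hg h
    | succ c ihc =>
      have main : ∀ (a b : ℕ) (f g : S), a + b = c + 1 → f ∉ maximalIdeal S ^ (a+1) → g ∉ maximalIdeal S ^ (b+1) →
          f * g ∈ maximalIdeal S ^ (a+b+1) →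
          Ideal.Quotient.mk (Ideal.span {x}) f ∈ maximalIdeal (S ⧸ Ideal.span {x}) ^ (a+1) → False := by
        intro a b f g hab hf hg hfg hmem
        obtain ⟨f', hf', h, rfl⟩ := key _ _ hmem
        have hxh : x * h ∉ maximalIdeal S ^ (a+1) := fun hh => hf (add_mem hf' hh)
        rcases a with _ | a
        · apply hxh; simp only [zero_add, pow_one]; exact Ideal.mul_mem_right _ _ hx
        have hh : h ∉ maximalIdeal S ^ (a+1) := by
          intro hh; apply hxh
          rw [pow_succ' _ (a+1)]; exact Ideal.mul_mem_mul hx hh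
        refine ihc a b h g (by omega) hh hg ?_
        apply reg_Kstep hx hx2
        have : x * (h * g) = (f' + x * h) * g - f' * g := by ring
        rw [this]
        have e : a + b + 1 + 1 = a + 1 + b + 1 := by ring
        rw [e]
        refine sub_mem hfg ?_
        by_contra hcon
        -- f' ∈ m^(a+2), g arbitrary in m^b
        by_cases hgb : g ∈ maximalIdeal S ^ b
        · apply hcon
          have := Ideal.mul_mem_mul hf' hgb
          rw [← pow_add] at this
          convert this using 2; ring
        · rcases b with _ | b
          · simp at hgb
          · exact ihc (a+1) b _ g (by omega) hf hgb (Ideal.pow_le_pow_right (by omega) hfg)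
      intro a b f g hab hf hg hfg
      have := ih _ h2 _ a b (Ideal.Quotient.mk _ f) (Ideal.Quotient.mk _ g) rfl
      rw [← map_mul] at this
      by_cases hf' : Ideal.Quotient.mk (Ideal.span {x}) f ∈ maximalIdeal (S ⧸ Ideal.span {x}) ^ (a+1)
      · exact main a b f g hab hf hg hfg hf'
      by_cases hg' : Ideal.Quotient.mk (Ideal.span {x}) g ∈ maximalIdeal (S ⧸ Ideal.span {x}) ^ (b+1)
      · exact main b a g f (by omega) hg hf (by rw [mul_comm, add_comm b a]; exact hfg) hg'
      exact this hf' hg' (key2 _ _ hfg)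

end Reg
end SuppLC

namespace SuppLC

/-- projective dimension at most `n` -/
def PD (R : Type u) [CommRing R] (M : Type u) [AddCommGroup M] [Module R M] (n : ℕ) : Prop :=
  HasProjectiveDimensionLE (ModuleCat.of R M) n

section
variable {R : Type u} [CommRing R] {A B C M M' : Type u} [AddCommGroup A] [Module R A] [AddCommGroup B] [Module R B]
  [AddCommGroup C] [Module R C] [AddCommGroup M] [Module R M] [AddCommGroup M'] [Module R M']

lemma ses {f : A →ₗ[R] B} {g : B →ₗ[R] C} (hf : Function.Injective f) (hg : Function.Surjective g)
    (h : Function.Exact f g) : 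
    (ShortComplex.mk (ModuleCat.ofHom f) (ModuleCat.ofHom g) (by
      ext x; simp [h.apply_apply_eq_zero])).ShortExact := by
  have hm : Mono (ModuleCat.ofHom f) := (ModuleCat.mono_iff_injective _).2 hf
  have he : Epi (ModuleCat.ofHom g) := (ModuleCat.epi_iff_surjective _).2 hg
  exact { exact := by
            rw [ShortComplex.moduleCat_exact_iff_range_eq_ker]
            exact (LinearMap.exact_iff.1 h).symm
          mono_f := hm
          epi_g := he }

lemma PD_2 {f : A →ₗ[R] B} {g : B →ₗ[R] C} (hf : Function.Injective f) (hg : Function.Surjective g)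
    (h : Function.Exact f g) {n : ℕ} (h1 : PD R A n) (h3 : PD R C n) : PD R B n :=
  (ses hf hg h).hasProjectiveDimensionLT_X₂ (n+1) h1 h3

lemma PD_3 {f : A →ₗ[R] B} {g : B →ₗ[R] C} (hf : Function.Injective f) (hg : Function.Surjective g)
    (h : Function.Exact f g) {n : ℕ} (h1 : PD R A n) (h2 : PD R B (n+1)) : PD R C (n+1) :=
  (ses hf hg h).hasProjectiveDimensionLT_X₃ (n+1) h1 h2

lemma PD_1 {f : A →ₗ[R] B} {g : B →ₗ[R] C} (hf : Function.Injective f) (hg : Function.Surjective g)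
    (h : Function.Exact f g) {n : ℕ} (h2 : PD R B n) (h3 : PD R C (n+1)) : PD R A n :=
  (ses hf hg h).hasProjectiveDimensionLT_X₁ (n+1) h2 h3

lemma PD_zero : PD R M 0 ↔ Module.Projective R M := by
  unfold PD
  rw [← projective_iff_hasProjectiveDimensionLE_zero, ← IsProjective.iff_projective]

lemma PD_mono {n m : ℕ} (h : n ≤ m) (hM : PD R M n) : PD R M m := by
  unfold PD at *
  exact hasProjectiveDimensionLT_of_ge _ (n+1) (m+1) (by omega)

lemma PD_proj [h : Module.Projective R M] (n : ℕ) : PD R M n := PD_mono (Nat.zero_le n) (PD_zero.2 h)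

lemma PD_equiv (e : M ≃ₗ[R] M') {n : ℕ} (h : PD R M n) : PD R M' n := by
  unfold PD at *
  exact hasProjectiveDimensionLT_of_iso e.toModuleIso (n+1)

lemma PD_retract (i : M →ₗ[R] M') (p : M' →ₗ[R] M) (hip : p ∘ₗ i = LinearMap.id) {n : ℕ}
    (h : PD R M' n) : PD R M n := by
  unfold PD at *
  let ret : Retract (ModuleCat.of R M) (ModuleCat.of R M') :=
    { i := ModuleCat.ofHom i, r := ModuleCat.ofHom p, retract := by
        rw [← ModuleCat.ofHom_comp, hip]; rfl }
  exact ret.hasProjectiveDimensionLT (n+1)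

lemma PD_subsing [Subsingleton M] (n : ℕ) : PD R M n := PD_proj n

lemma PD_quot_succ [IsLocalRing R] [IsNoetherianRing R] [Module.Finite R M] {x : R} (hx : x ∈ maximalIdeal R)
    (hreg : IsSMulRegular M x) (n : ℕ) : PD R (QuotSMulTop x M) (n+1) ↔ PD R M n := by
  have h := ModuleCat.projectiveDimension_quotSMulTop_eq_succ_of_isSMulRegular (ModuleCat.of R M) x hreg hx
  unfold PD
  rw [← projectiveDimension_le_iff, ← projectiveDimension_le_iff]
  have h' : projectiveDimension (ModuleCat.of R (QuotSMulTop x M)) = projectiveDimension (ModuleCat.of R M) + 1 := h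
  rw [h', Nat.cast_add, Nat.cast_one]
  generalize projectiveDimension (ModuleCat.of R M) = d
  induction d with
  | bot => simp
  | coe d =>
    induction d with
    | top => constructor <;> intro h <;> exact absurd h (by norm_cast)
    | coe d => norm_cast; omega

lemma PD_quot_zero [IsLocalRing R] [IsNoetherianRing R] [Module.Finite R M] {x : R} (hx : x ∈ maximalIdeal R)
    (hreg : IsSMulRegular M x) [Nontrivial M] : ¬ PD R (QuotSMulTop x M) 0 := by
  have h := ModuleCat.projectiveDimension_quotSMulTop_eq_succ_of_isSMulRegular (ModuleCat.of R M) x hreg hx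
  unfold PD
  rw [← projectiveDimension_le_iff]
  have h' : projectiveDimension (ModuleCat.of R (QuotSMulTop x M)) = projectiveDimension (ModuleCat.of R M) + 1 := h
  rw [h']
  have hb : projectiveDimension (ModuleCat.of R M) ≠ ⊥ := by
    rw [Ne, projectiveDimension_eq_bot_iff, ModuleCat.isZero_iff_subsingleton]
    exact not_subsingleton M
  revert hb
  generalize projectiveDimension (ModuleCat.of R M) = d
  induction d with
  | bot => simp
  | coe d =>
    induction d with
    | top => simp
    | coe d => intro _; norm_cast; omega

lemma PD_pred_of_quot [IsLocalRing R] [IsNoetherianRing R] [Module.Finite R M] {x : R} (hx : x ∈ maximalIdeal R)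
    (hreg : IsSMulRegular M x) {n : ℕ} (h : PD R (QuotSMulTop x M) n) : PD R M (n-1) := by
  rcases n with _ | n
  · rcases subsingleton_or_nontrivial M with h' | h'
    · exact PD_subsing _
    · exact absurd h (PD_quot_zero hx hreg)
  · exact (PD_quot_succ hx hreg n).1 h

lemma PD_prime [IsLocalRing R] [IsNoetherianRing R] {g : ℕ} (hk : PD R (R ⧸ maximalIdeal R) g) :
    ∀ (p : Ideal R) [p.IsPrime], PD R (R ⧸ p) g := by
  intro p
  induction p using WellFoundedGT.induction with
  | ind p ih =>
    intro hp
    by_cases hpm : p = maximalIdeal R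
    · subst hpm; exact hk
    obtain ⟨x, hx, hxp⟩ : ∃ x ∈ maximalIdeal R, x ∉ p := by
      by_contra! hcon
      exact hpm (le_antisymm (IsLocalRing.le_maximalIdeal hp.ne_top) hcon)
    have key : ∀ (M : Type u) [AddCommGroup M] [Module R M] [Module.Finite R M],
        p ⊔ Ideal.span {x} ≤ Module.annihilator R M → PD R M g := by
      intro M _ _ hfin
      refine IsNoetherianRing.induction_on_isQuotientEquivQuotientPrime R hfin
        (motive := fun M _ _ _ => p ⊔ Ideal.span {x} ≤ Module.annihilator R M → PD R M g) ?_ ?_ ?_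
      · intro N _ _ _ _ _; exact PD_subsing _
      · intro N _ _ _ q e hq
        rw [e.annihilator_eq, Ideal.annihilator_quotient] at hq
        have : p < q.1 := lt_of_le_of_ne (le_sup_left.trans hq) (by
          intro h; apply hxp; rw [h]
          exact hq (Ideal.mem_sup_right (Ideal.mem_span_singleton_self x)))
        have hqp := q.2
        exact PD_equiv e.symm (ih q.1 this)
      · intro N1 _ _ _ N2 _ _ _ N3 _ _ _ f g hf hg hfg h1 h3 h2
        exact PD_2 hf hg hfg (h1 (h2.trans (LinearMap.annihilator_le_of_injective f hf)))
          (h3 (h2.trans (LinearMap.annihilator_le_of_surjective g hg)))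
    have hreg : IsSMulRegular (R ⧸ p) x := by
      rw [isSMulRegular_iff_right_eq_zero_of_smul]
      intro a ha
      obtain ⟨a, rfl⟩ := Ideal.Quotient.mk_surjective a
      rw [← Ideal.Quotient.mk_eq_mk, ← Submodule.Quotient.mk_smul, smul_eq_mul, Ideal.Quotient.mk_eq_mk, Ideal.Quotient.eq_zero_iff_mem] at ha
      exact Ideal.Quotient.eq_zero_iff_mem.2 ((hp.mem_or_mem ha).resolve_left hxp)
    refine PD_mono (Nat.sub_le g 1) (PD_pred_of_quot hx hreg (key _ ?_))
    apply sup_le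
    · calc p = Module.annihilator R (R ⧸ p) := Ideal.annihilator_quotient.symm
        _ ≤ _ := LinearMap.annihilator_le_of_surjective _ (Submodule.mkQ_surjective _)
    · rw [Ideal.span_le, Set.singleton_subset_iff]
      exact QuotSMulTop.mem_annihilator _ x

theorem PD_all [IsLocalRing R] [IsNoetherianRing R] {g : ℕ} (hk : PD R (R ⧸ maximalIdeal R) g)
    (M : Type u) [AddCommGroup M] [Module R M] [hfin : Module.Finite R M] : PD R M g := by
  refine IsNoetherianRing.induction_on_isQuotientEquivQuotientPrime R hfin
        (motive := fun M _ _ _ => PD R M g) ?_ ?_ ?_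
  · intro N _ _ _ _; exact PD_subsing _
  · intro N _ _ _ q e
    have hqp := q.2
    exact PD_equiv e.symm (PD_prime hk q.1)
  · intro N1 _ _ _ N2 _ _ _ N3 _ _ _ f g hf hg hfg h1 h3
    exact PD_2 hf hg hfg h1 h3
end
end SuppLC

namespace SuppLC

section
variable {R : Type u} [CommRing R]

theorem PD_loc (S : Submonoid R) (Rs : Type u) [CommRing Rs] [Algebra R Rs] [IsLocalization S Rs] (g : ℕ) :
    ∀ (M Ms : Type u) [AddCommGroup M] [Module R M] [AddCommGroup Ms] [Module R Ms] [Module Rs Ms]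
    [IsScalarTower R Rs Ms] (f : M →ₗ[R] Ms) [IsLocalizedModule S f], PD R M g → PD Rs Ms g := by
  induction g with
  | zero =>
    intro M Ms _ _ _ _ _ _ f _ h
    rw [PD_zero] at *
    exact Module.projective_of_isLocalizedModule S f
  | succ g ih =>
    intro M Ms _ _ _ _ _ _ f _ h
    let π : (M →₀ R) →ₗ[R] M := Finsupp.linearCombination R id
    have hπ : Function.Surjective π := Finsupp.linearCombination_id_surjective R M
    let K := LinearMap.ker π
    have hex : Function.Exact K.subtype π := LinearMap.exact_subtype_ker_map π
    have hinj : Function.Injective K.subtype := K.subtype_injective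
    have hK : PD R K g := PD_1 hinj hπ hex (PD_proj g) h
    let fK : K →ₗ[R] TensorProduct R Rs K := TensorProduct.mk R Rs K 1
    let fF : (M →₀ R) →ₗ[R] TensorProduct R Rs (M →₀ R) := TensorProduct.mk R Rs (M →₀ R) 1
    have : IsLocalizedModule S fK := (isLocalizedModule_iff_isBaseChange S Rs _).2 (TensorProduct.isBaseChange R K Rs)
    have : IsLocalizedModule S fF := (isLocalizedModule_iff_isBaseChange S Rs _).2 (TensorProduct.isBaseChange R _ Rs)
    have hKs := ih K _ fK hK
    exact PD_3 (f := IsLocalizedModule.mapExtendScalars S fK fF Rs K.subtype)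
      (g := IsLocalizedModule.mapExtendScalars S fF f Rs π)
      (IsLocalizedModule.map_injective S fK fF _ hinj) (IsLocalizedModule.map_surjective S fF f _ hπ)
      (IsLocalizedModule.map_exact S fK fF f _ _ hex) hKs (PD_proj _)

/-- quotient of quotient -/
noncomputable def quotTopEquiv (J : Ideal R) (y : R) : QuotSMulTop y (R ⧸ J) ≃ₗ[R] R ⧸ (J ⊔ Ideal.span {y}) :=
  (Submodule.quotEquivOfEq _ _ (by
    ext a
    obtain ⟨a, rfl⟩ := Ideal.Quotient.mk_surjective a
    simp only [Submodule.mem_map, Submodule.mem_smul_pointwise_iff_exists]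
    constructor
    · rintro ⟨b, -, hb⟩
      obtain ⟨b, rfl⟩ := Ideal.Quotient.mk_surjective b
      exact ⟨y * b, Ideal.mul_mem_right _ _ (Ideal.mem_span_singleton_self y), hb⟩
    · rintro ⟨b, hb, hb'⟩
      obtain ⟨c, rfl⟩ := Ideal.mem_span_singleton.1 hb
      exact ⟨Ideal.Quotient.mk J c, trivial, hb'⟩)) ≪≫ₗ
  Submodule.quotientQuotientEquivQuotientSup J (Ideal.span {y})

lemma smulReg_quot_iff (J : Ideal R) (y : R) : IsSMulRegular (R ⧸ J) y ↔ ∀ f, y * f ∈ J → f ∈ J := by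
  rw [isSMulRegular_iff_right_eq_zero_of_smul]
  constructor
  · intro h f hf
    exact Ideal.Quotient.eq_zero_iff_mem.1 (h (Ideal.Quotient.mk J f) (Ideal.Quotient.eq_zero_iff_mem.2 hf))
  · intro h a ha
    obtain ⟨a, rfl⟩ := Ideal.Quotient.mk_surjective a
    exact Ideal.Quotient.eq_zero_iff_mem.2 (h a (Ideal.Quotient.eq_zero_iff_mem.1 ha))

theorem PD_reg [IsRegularLocalRing R] {N : ℕ} (hN : ringKrullDim R = N) :
    PD R (R ⧸ maximalIdeal R) N := by
  classical
  obtain ⟨s, hs, hc⟩ := exists_gens hN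
  have hg := reg_good hN s hs hc
  have : ∀ T : Finset R, T ⊆ s → PD R (R ⧸ Ideal.span (T : Set R)) T.card := by
    intro T
    induction T using Finset.induction_on with
    | empty =>
      intro _
      have e : (R ⧸ Ideal.span ((∅ : Finset R) : Set R)) ≃ₗ[R] R := Submodule.quotEquivOfEqBot _ (by simp)
      exact PD_equiv e.symm (PD_proj _)
    | insert y T hy ih =>
      intro hT
      have hT' : T ⊆ s := (Finset.subset_insert y T).trans hT
      have hys : y ∈ s := hT (Finset.mem_insert_self y T)
      have hreg : IsSMulRegular (R ⧸ Ideal.span (T : Set R)) y := by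
        rw [smulReg_quot_iff]
        have := hg T (by exact_mod_cast hT') y hys (by simpa using hy)
        simpa using this
      have hym : y ∈ maximalIdeal R := by rw [← hs]; exact Ideal.subset_span hys
      have h1 := (PD_quot_succ hym hreg T.card).2 (ih hT')
      rw [Finset.card_insert_of_notMem hy, Finset.coe_insert, Set.insert_eq, Set.union_comm, Ideal.span_union]
      exact PD_equiv (quotTopEquiv _ y) h1
  have h := this s le_rfl
  rwa [hs, hc] at h

/-- reduction mod a regular element -/
theorem PD_mod (x : R) (g : ℕ) : IsSMulRegular R x →
    ∀ (M : Type u) [AddCommGroup M] [Module R M], IsSMulRegular M x →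
    PD R M g → PD (R ⧸ Ideal.span {x}) (QuotSMulTop x M) g := by
  intro hx
  induction g with
  | zero =>
    intro M _ _ hM h
    rw [PD_zero] at *
    exact Module.Projective.of_equiv ((QuotSMulTop.equivQuotTensor x M).extendScalarsOfSurjective
      Ideal.Quotient.mk_surjective).symm
  | succ g ih =>
    intro M _ _ hM h
    let π : (M →₀ R) →ₗ[R] M := Finsupp.linearCombination R id
    have hπ : Function.Surjective π := Finsupp.linearCombination_id_surjective R M
    let K := LinearMap.ker π
    have hex : Function.Exact K.subtype π := LinearMap.exact_subtype_ker_map π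
    have hinj : Function.Injective K.subtype := K.subtype_injective
    have hK : PD R K g := PD_1 hinj hπ hex (PD_proj g) h
    have hF : IsSMulRegular (M →₀ R) x := by
      intro a b hab
      ext i
      exact hx (DFunLike.congr_fun hab i)
    have hKx : IsSMulRegular K x := hF.of_injective K.subtype hinj
    have hinj' : Function.Injective (QuotSMulTop.map (M := K) (M' := M →₀ R) x K.subtype) := by
      rw [injective_iff_map_eq_zero]
      intro a ha
      obtain ⟨a, rfl⟩ := Submodule.Quotient.mk_surjective _ a
      have ha' : (Submodule.Quotient.mk (K.subtype a) : QuotSMulTop x (M →₀ R)) = 0 := ha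
      rw [Submodule.Quotient.mk_eq_zero, Submodule.mem_smul_pointwise_iff_exists] at ha'
      obtain ⟨b, -, hb⟩ := ha'
      have hb0 : b ∈ K := by
        apply hM
        have h2 : π (x • b) = 0 := by rw [hb]; exact a.2
        rw [map_smul] at h2
        simpa using h2
      rw [Submodule.Quotient.mk_eq_zero, Submodule.mem_smul_pointwise_iff_exists]
      exact ⟨⟨b, hb0⟩, trivial, Subtype.ext hb⟩
    have hs : Function.Surjective (algebraMap R (R ⧸ Ideal.span {x})) := Ideal.Quotient.mk_surjective
    refine PD_3 (f := (QuotSMulTop.map (M := K) (M' := M →₀ R) x K.subtype).extendScalarsOfSurjective hs)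
      (g := (QuotSMulTop.map x π).extendScalarsOfSurjective hs) hinj' (QuotSMulTop.map_surjective x hπ)
      (QuotSMulTop.map_exact x hex hπ) (ih K hKx hK) ?_
    have : Module.Free (R ⧸ Ideal.span {x}) (QuotSMulTop x (M →₀ R)) := inferInstance
    exact PD_proj _

end
end SuppLC

namespace SuppLC

section
variable {R : Type u} [CommRing R]

lemma exists_functional [IsLocalRing R] [IsNoetherianRing R] {x : R} (hx : x ∈ maximalIdeal R)
    (hx2 : x ∉ maximalIdeal R ^ 2) :
    ∃ l : maximalIdeal R →ₗ[R] R ⧸ maximalIdeal R, l ⟨x, hx⟩ = 1 := by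
  have hne : (maximalIdeal R).toCotangent ⟨x, hx⟩ ≠ 0 := by
    rw [Ne, Ideal.toCotangent_eq_zero]; exact hx2
  have hne' : (((maximalIdeal R).toCotangent ⟨x, hx⟩ : (maximalIdeal R).Cotangent) : CotangentSpace R) ≠ 0 := hne
  obtain ⟨f, hf⟩ : ∃ f : Module.Dual (ResidueField R) (CotangentSpace R), f ((maximalIdeal R).toCotangent ⟨x, hx⟩) ≠ 0 := by
    by_contra! hcon
    exact hne' ((Module.forall_dual_apply_eq_zero_iff (ResidueField R) _).1 hcon)
  set c : ResidueField R := f ((maximalIdeal R).toCotangent ⟨x, hx⟩)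
  let f' : CotangentSpace R →ₗ[R] ResidueField R := (c⁻¹ • f).restrictScalars R
  refine ⟨f' ∘ₗ (maximalIdeal R).toCotangent, ?_⟩
  change c⁻¹ * c = 1
  exact inv_mul_cancel₀ hf

/-- the residue field of `R/x` is a retract of `m/xm` -/
lemma PD_residue_quot [IsLocalRing R] [IsNoetherianRing R] {x : R} (hx : x ∈ maximalIdeal R)
    (hx2 : x ∉ maximalIdeal R ^ 2) [IsLocalRing (R ⧸ Ideal.span {x})] {g : ℕ}
    (h : PD (R ⧸ Ideal.span {x}) (QuotSMulTop x (maximalIdeal R)) g) :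
    PD (R ⧸ Ideal.span {x}) ((R ⧸ Ideal.span {x}) ⧸ maximalIdeal (R ⧸ Ideal.span {x})) g := by
  obtain ⟨l, hl⟩ := exists_functional hx hx2
  let R' := R ⧸ Ideal.span {x}
  let k' := R' ⧸ maximalIdeal R'
  have hmk : ∀ a ∈ maximalIdeal R, Ideal.Quotient.mk (Ideal.span {x}) a ∈ maximalIdeal R' := by
    intro a ha; rw [max_quot]; exact Ideal.mem_map_of_mem _ ha
  let c : (R ⧸ maximalIdeal R) →ₗ[R] k' := Submodule.liftQ (maximalIdeal R) (LinearMap.toSpanSingleton R k' 1) (by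
    intro a ha
    rw [LinearMap.mem_ker, LinearMap.toSpanSingleton_apply]
    change Ideal.Quotient.mk _ ((Ideal.Quotient.mk (Ideal.span {x}) a) * 1) = 0
    rw [mul_one]
    exact Ideal.Quotient.eq_zero_iff_mem.2 (hmk a ha))
  let p0 : QuotSMulTop x (maximalIdeal R) →ₗ[R] k' := Submodule.liftQ _ (c ∘ₗ l) (by
    intro a ha
    rw [Submodule.mem_smul_pointwise_iff_exists] at ha
    obtain ⟨b, -, rfl⟩ := ha
    rw [LinearMap.mem_ker, map_smul]
    generalize (c ∘ₗ l) b = z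
    obtain ⟨z, rfl⟩ := Ideal.Quotient.mk_surjective z
    have : x • (Ideal.Quotient.mk (maximalIdeal R')) z = Ideal.Quotient.mk (maximalIdeal R') (Ideal.Quotient.mk (Ideal.span {x}) x * z) := rfl
    rw [this, Ideal.Quotient.eq_zero_iff_mem]
    exact Ideal.mul_mem_right _ _ (hmk x hx))
  have hs : Function.Surjective (algebraMap R R') := Ideal.Quotient.mk_surjective
  let p : QuotSMulTop x (maximalIdeal R) →ₗ[R'] k' := p0.extendScalarsOfSurjective hs
  let x0 : QuotSMulTop x (maximalIdeal R) := Submodule.Quotient.mk ⟨x, hx⟩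
  let i : k' →ₗ[R'] QuotSMulTop x (maximalIdeal R) :=
    Submodule.liftQ (maximalIdeal R') (LinearMap.toSpanSingleton R' _ x0) (by
      intro a ha
      rw [LinearMap.mem_ker, LinearMap.toSpanSingleton_apply]
      rw [max_quot, Ideal.mem_map_iff_of_surjective _ Ideal.Quotient.mk_surjective] at ha
      obtain ⟨a, ha, rfl⟩ := ha
      change (Submodule.Quotient.mk (a • ⟨x, hx⟩) : QuotSMulTop x (maximalIdeal R)) = 0
      rw [Submodule.Quotient.mk_eq_zero, Submodule.mem_smul_pointwise_iff_exists]
      exact ⟨⟨a, ha⟩, trivial, Subtype.ext (mul_comm _ _)⟩)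
  refine PD_retract i p ?_ h
  apply Submodule.linearMap_qext
  apply LinearMap.ext_ring
  change p (LinearMap.toSpanSingleton R' _ x0 1) = 1
  rw [LinearMap.toSpanSingleton_apply, one_smul]
  change c (l ⟨x, hx⟩) = 1
  rw [hl]
  change LinearMap.toSpanSingleton R k' 1 1 = 1
  simp

lemma PD_depth_zero [IsLocalRing R] [IsNoetherianRing R] (hm : maximalIdeal R ∈ associatedPrimes R R)
    (g : ℕ) : PD R (R ⧸ maximalIdeal R) g → PD R (R ⧸ maximalIdeal R) 0 := by
  induction g with
  | zero => exact id
  | succ g ih =>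
    intro h
    apply ih
    obtain ⟨f, hf⟩ := (isAssociatedPrime_iff_exists_injective_linearMap _ _).1 hm |>.2
    exact PD_1 hf (Submodule.mkQ_surjective (LinearMap.range f)) (LinearMap.exact_map_mkQ_range f)
      (PD_proj _) (PD_all h _)

lemma max_eq_bot_of_PD_zero [IsLocalRing R] (h : PD R (R ⧸ maximalIdeal R) 0) : maximalIdeal R = ⊥ := by
  rw [PD_zero] at h
  obtain ⟨s, hs⟩ := Module.projective_lifting_property (maximalIdeal R).mkQ LinearMap.id
    (Submodule.mkQ_surjective _)
  have h1 : Ideal.Quotient.mk (maximalIdeal R) (s 1) = 1 := LinearMap.congr_fun hs 1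
  have h2 : s 1 ∉ maximalIdeal R := by
    rw [← Ideal.Quotient.eq_zero_iff_mem, h1]; exact one_ne_zero
  have h3 : IsUnit (s 1) := by simpa using h2
  rw [eq_bot_iff]
  intro a ha
  have : a • s 1 = 0 := by
    rw [← map_smul]
    have : a • (1 : R ⧸ maximalIdeal R) = 0 := by
      change Ideal.Quotient.mk _ (a * 1) = 0
      rw [mul_one]; exact Ideal.Quotient.eq_zero_iff_mem.2 ha
    rw [this, map_zero]
  exact (h3.mul_left_eq_zero).1 this

lemma reg_of_max_bot [IsLocalRing R] [IsNoetherianRing R] (h : maximalIdeal R = ⊥) : IsRegularLocalRing R :=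
  (reg_of_gens (N := 0) (by simpa using ringKrullDim_nonneg_of_nontrivial (R := R)) ∅ (by simp [h]) (by simp)).1

theorem ABS (N : ℕ) : ∀ (R : Type u) [CommRing R] [IsLocalRing R] [IsNoetherianRing R] (g : ℕ),
    ringKrullDim R = N → PD R (R ⧸ maximalIdeal R) g → IsRegularLocalRing R := by
  classical
  induction N with
  | zero =>
    intro R _ _ _ g hN h
    by_cases hm : maximalIdeal R ∈ associatedPrimes R R
    · exact reg_of_max_bot (max_eq_bot_of_PD_zero (PD_depth_zero hm g h))
    · exfalso
      obtain ⟨p, hp⟩ := associatedPrimes.nonempty R R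
      have hpp : p.IsPrime := hp.1
      have : Ring.KrullDimLE 0 R := by
        rw [Ring.krullDimLE_iff, hN]
      have := Ideal.IsPrime.isMaximal' (R := R) (I := p) hpp
      rw [IsLocalRing.eq_maximalIdeal this] at hp
      exact hm hp
  | succ N ih =>
    intro R _ _ _ g hN h
    by_cases hm : maximalIdeal R ∈ associatedPrimes R R
    · exact reg_of_max_bot (max_eq_bot_of_PD_zero (PD_depth_zero hm g h))
    obtain ⟨x, hx, hx2, hxp⟩ := exists_avoid (associatedPrimes R R) (associatedPrimes.finite R R)
      (fun p hp => ⟨hp.1, fun e => hm (e ▸ hp)⟩) (not_le_sq (max_ne_bot_of_dim_succ hN))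
    have hreg : IsSMulRegular R x := by
      have := biUnion_associatedPrimes_eq_compl_regular R (M := R)
      by_contra hcon
      have hmem : x ∈ ⋃ p ∈ associatedPrimes R R, (p : Set R) := by rw [this]; exact hcon
      simp only [Set.mem_iUnion] at hmem
      obtain ⟨p, hp, hxp'⟩ := hmem
      exact hxp p hp hxp'
    have hle : Ideal.span {x} ≤ maximalIdeal R := by
      rw [Ideal.span_le]; simpa using hx
    have := isLocal_quot hle
    have h1 := PD_mod x g hreg (maximalIdeal R) (hreg.of_injective (maximalIdeal R).subtype (Submodule.subtype_injective _))
      (PD_all h _)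
    have h2 := PD_residue_quot hx hx2 h1
    have hd := ringKrullDim_quotient_span_singleton_succ_eq_ringKrullDim hreg hx
    have hd' : ringKrullDim (R ⧸ Ideal.span {x}) = N := by
      obtain ⟨d, hd'⟩ := exists_dim (R ⧸ Ideal.span {x})
      rw [hd', hN] at hd
      rw [hd']
      have : d + 1 = N + 1 := by exact_mod_cast hd
      exact_mod_cast (by omega : d = N)
    have h3 := ih _ g hd' h2
    obtain ⟨t, ht, htc⟩ := exists_gens hd'
    choose φ hφ using Ideal.Quotient.mk_surjective (I := Ideal.span {x})
    refine (reg_of_gens (N := N+1) hN.ge (insert x (t.image φ)) ?_ ?_).1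
    · rw [Finset.coe_insert, Ideal.span_insert]
      have : Ideal.span (t : Set (R ⧸ Ideal.span {x})) = (Ideal.span ((t.image φ : Finset R) : Set R)).map (Ideal.Quotient.mk (Ideal.span {x})) := by
        rw [Ideal.map_span]
        congr 1
        ext a
        simp only [Finset.coe_image, Set.mem_image, exists_exists_and_eq_and, hφ]
        simp
      rw [this, max_quot] at ht
      have := congrArg (Ideal.comap (Ideal.Quotient.mk (Ideal.span {x}))) ht
      rw [Ideal.comap_map_of_surjective _ Ideal.Quotient.mk_surjective, Ideal.comap_map_of_surjective _ Ideal.Quotient.mk_surjective,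
        ← RingHom.ker_eq_comap_bot, Ideal.mk_ker, sup_eq_left.2 hle] at this
      rw [sup_comm]; exact this
    · refine (Finset.card_insert_le _ _).trans ?_
      have := Finset.card_image_le (s := t) (f := φ)
      omega

theorem reg_loc [IsRegularLocalRing R] (q : Ideal R) [q.IsPrime] :
    IsRegularLocalRing (Localization.AtPrime q) := by
  obtain ⟨n, hn⟩ := exists_dim R
  obtain ⟨N, hN⟩ := exists_dim (Localization.AtPrime q)
  have h1 : PD R (R ⧸ q) n := PD_all (PD_reg hn) _
  refine ABS N _ n hN ?_
  have h2 := PD_loc q.primeCompl (Localization.AtPrime q) n _ _ (Submodule.toLocalizedQuotient' (Localization.AtPrime q) q.primeCompl (Algebra.linearMap R (Localization.AtPrime q)) q) h1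
  have e : Submodule.localized' (Localization.AtPrime q) q.primeCompl (Algebra.linearMap R (Localization.AtPrime q)) q
      = maximalIdeal (Localization.AtPrime q) := by
    rw [Ideal.localized'_eq_map, Localization.AtPrime.map_eq_maximalIdeal]
  exact PD_equiv (Submodule.quotEquivOfEq _ _ e) h2
end
end SuppLC

namespace SuppLC

section
variable {S : Type u} [CommRing S]
open RingTheory.Sequence CategoryTheory.Abelian

/-- a minimal generating set is a regular sequence -/
lemma reg_seq [IsRegularLocalRing S] {N : ℕ} (hN : ringKrullDim S = N) :
    ∃ rs : List S, rs.length = N ∧ (∀ r ∈ rs, r ∈ maximalIdeal S) ∧ IsRegular S rs := by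
  classical
  obtain ⟨s, hs, hc⟩ := exists_gens hN
  have hg := reg_good hN s hs hc
  have hm : ∀ r ∈ s.toList, r ∈ maximalIdeal S := by
    intro r hr
    rw [← hs]; exact Ideal.subset_span (by simpa using hr)
  refine ⟨s.toList, by simpa using hc, hm, ?_⟩
  rw [IsLocalRing.isRegular_iff_isWeaklyRegular_of_subset_maximalIdeal hm]
  refine ⟨fun i hi => ?_⟩
  have hi' : s.toList[i] ∈ s := Finset.mem_toList.1 (List.getElem_mem hi)
  have : (Ideal.ofList (s.toList.take i) • (⊤ : Submodule S S) : Submodule S S) = Ideal.ofList (s.toList.take i) := by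
    simp
  rw [this]
  rw [smulReg_quot_iff]
  have := hg {r | r ∈ s.toList.take i} (by
    intro r hr
    have := List.mem_of_mem_take hr
    simpa using this) _ hi' (by
      intro h
      have hnd := s.nodup_toList
      rw [Set.mem_ofPred_eq, List.mem_take_iff_getElem] at h
      obtain ⟨j, hj, hj'⟩ := h
      have := (List.Nodup.getElem_inj_iff hnd).1 hj'
      omega)
  simpa [Ideal.ofList] using this

lemma height_coheight_one [IsRegularLocalRing S] {N : ℕ} (hN : ringKrullDim S = N) (P : Ideal S) [P.IsPrime]
    (hP : P ≠ maximalIdeal S) (hmax : ∀ Q : Ideal S, Q.IsPrime → P ≤ Q → Q = P ∨ Q = maximalIdeal S) :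
    ((N - 1 : ℕ) : WithBot ℕ∞) ≤ ringKrullDim (Localization.AtPrime P) := by
  have hPm : P ≤ maximalIdeal S := le_maximalIdeal Ideal.IsPrime.ne_top'
  obtain ⟨x, hx, hxP⟩ := SetLike.exists_of_lt (lt_of_le_of_ne hPm hP)
  obtain ⟨rs, hrs, hrm, hreg⟩ := reg_seq hN
  have hxreg : IsSMulRegular (ModuleCat.of S (S ⧸ P)) x :=
    (smulReg_quot_iff P x).2 fun f hf => (Ideal.IsPrime.mem_or_mem ‹_› hf).resolve_left hxP
  let Q := ModuleCat.of S (QuotSMulTop x (S ⧸ P))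
  have hsupp : Module.support S Q ⊆ PrimeSpectrum.zeroLocus (maximalIdeal S) := by
    intro p hp
    have h1 : Module.annihilator S Q ≤ p.asIdeal := by
      rw [Module.support_eq_zeroLocus] at hp; exact hp
    have hxp : x ∈ p.asIdeal := h1 (by
      rw [Module.mem_annihilator]
      intro a
      obtain ⟨a, rfl⟩ := Submodule.Quotient.mk_surjective _ a
      rw [← Submodule.Quotient.mk_smul]
      exact (Submodule.Quotient.mk_eq_zero _).2 (Submodule.smul_mem_pointwise_smul _ _ _ trivial))
    have hPp : P ≤ p.asIdeal := by
      intro y hy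
      apply h1
      rw [Module.mem_annihilator]
      intro a
      obtain ⟨a, rfl⟩ := Submodule.Quotient.mk_surjective _ a
      obtain ⟨a, rfl⟩ := Ideal.Quotient.mk_surjective a
      rw [← Submodule.Quotient.mk_smul]
      have : y • (Ideal.Quotient.mk P) a = 0 := 
        Ideal.Quotient.eq_zero_iff_mem.2 (Ideal.mul_mem_right _ _ hy)
      rw [this]; rfl
    rcases hmax _ p.2 hPp with h | h
    · rw [h] at hxp; exact absurd hxp hxP
    · exact h.ge
  have hE := ModuleCat.subsingleton_ext_of_exists_isRegular (maximalIdeal S) Q hsupp (ModuleCat.of S S)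
    (by
      rw [Ideal.smul_eq_mul, Ideal.mul_top]
      exact (Ideal.IsPrime.ne_top').lt_top) rs hrm hreg
  have hE' : ∀ i < N - 1, Subsingleton (Ext (ModuleCat.of S (S ⧸ P)) (ModuleCat.of S S) i) := by
    intro i hi
    have hz := hE (1 + i) (by omega)
    have hsurj : ∀ e : Ext (ModuleCat.of S (S ⧸ P)) (ModuleCat.of S S) i, ∃ e', x • e' = e := by
      intro e
      obtain ⟨e', he'⟩ := Ext.contravariant_sequence_exact₁ (hxreg.smulShortComplex_shortExact) _ e rfl
        (Subsingleton.elim (α := Ext Q (ModuleCat.of S S) (1 + i)) _ _)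
      refine ⟨e', ?_⟩
      have key : ∀ e' : Ext (ModuleCat.of S (S ⧸ P)) (ModuleCat.of S S) i, x • e' =
          (Ext.mk₀ (x • 𝟙 (ModuleCat.of S (S ⧸ P)))).comp e' (zero_add i) := by
        intro e'
        rw [Ext.mk₀_smul, Ext.smul_comp, Ext.mk₀_id_comp]
      exact (key e').trans he'
    have hbot : (⊤ : Submodule S (Ext (ModuleCat.of S (S ⧸ P)) (ModuleCat.of S S) i)) = ⊥ := by
      refine Submodule.eq_bot_of_le_smul_of_le_jacobson_bot (maximalIdeal S) _ (Module.Finite.fg_top) ?_ 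
        (IsLocalRing.jacobson_eq_maximalIdeal ⊥ bot_ne_top).ge
      intro e _
      obtain ⟨e', rfl⟩ := hsurj e
      exact Submodule.smul_mem_smul hx trivial
    exact (Submodule.subsingleton_iff S).1 (subsingleton_of_bot_eq_top hbot.symm)
  obtain ⟨rs', hl, hmem, hreg'⟩ := ModuleCat.exists_isRegular_of_exists_subsingleton_ext P (N-1) (ModuleCat.of S S)
    (by
      rw [Ideal.smul_eq_mul, Ideal.mul_top]
      exact (Ideal.IsPrime.ne_top').lt_top) (ModuleCat.of S (S ⧸ P)) (by
        rw [Module.support_eq_zeroLocus]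
        congr 1
        exact congrArg _ Ideal.annihilator_quotient) hE'
  have h1 := IsWeaklyRegular.isRegular_of_isLocalization_of_mem (Localization.AtPrime P) P hreg'.toIsWeaklyRegular hmem
  have h2 := ringKrullDim_add_length_eq_ringKrullDim_of_isRegular _ h1
  rw [List.length_map, hl] at h2
  rw [← h2]
  have : Nontrivial (Localization.AtPrime P ⧸ Ideal.ofList (List.map (algebraMap S (Localization.AtPrime P)) rs')) := by
    rw [Ideal.Quotient.nontrivial_iff]
    intro h
    apply h1.top_ne_smul
    rw [h]; simp
  have h3 := ringKrullDim_nonneg_of_nontrivial (R := (Localization.AtPrime P ⧸ Ideal.ofList (List.map (algebraMap S (Localization.AtPrime P)) rs')))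
  exact le_add_of_nonneg_left h3
end
end SuppLC

namespace SuppLC

section
variable {A : Type u} [CommRing A]

/-- length of a quotient ring -/
noncomputable def len (J : Ideal A) : ℕ∞ := Module.length A (A ⧸ J)

lemma len_anti {J K : Ideal A} (h : J ≤ K) : len K ≤ len J :=
  Module.length_le_of_surjective (Submodule.mapQ J K LinearMap.id h)
    (Submodule.factor_surjective h)

lemma len_colon {J K : Ideal A} {x : A} (h : ∀ f, f ∈ K ↔ x * f ∈ J) :
    len J = len K + len (J ⊔ Ideal.span {x}) := by
  let f : (A ⧸ K) →ₗ[A] A ⧸ J := Submodule.mapQ K J (LinearMap.lsmul A A x) (fun a ha => (h a).1 ha)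
  let g : (A ⧸ J) →ₗ[A] A ⧸ (J ⊔ Ideal.span {x}) := Submodule.factor le_sup_left
  refine Module.length_eq_add_of_exact f g ?_ (Submodule.factor_surjective _) ?_
  · rw [injective_iff_map_eq_zero]
    intro a ha
    obtain ⟨a, rfl⟩ := Ideal.Quotient.mk_surjective a
    exact Ideal.Quotient.eq_zero_iff_mem.2 ((h a).2 (Ideal.Quotient.eq_zero_iff_mem.1 ha))
  · intro a
    obtain ⟨a, rfl⟩ := Ideal.Quotient.mk_surjective a
    constructor
    · intro ha
      have ha' : a ∈ J ⊔ Ideal.span {x} := Ideal.Quotient.eq_zero_iff_mem.1 ha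
      obtain ⟨j, hj, y, hy, rfl⟩ := Submodule.mem_sup.1 ha'
      obtain ⟨c, rfl⟩ := Ideal.mem_span_singleton.1 hy
      refine ⟨Ideal.Quotient.mk K c, ?_⟩
      change Ideal.Quotient.mk J (x * c) = _
      rw [Ideal.Quotient.eq]
      have : x * c - (j + x * c) = - j := by ring
      rw [this]; exact J.neg_mem hj
    · rintro ⟨c, hc⟩
      obtain ⟨c, rfl⟩ := Ideal.Quotient.mk_surjective c
      rw [← hc]
      change Ideal.Quotient.mk (J ⊔ Ideal.span {x}) (x * c) = 0
      rw [Ideal.Quotient.eq_zero_iff_mem]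
      exact Ideal.mem_sup_right (Ideal.mul_mem_right _ _ (Ideal.mem_span_singleton_self x))

/-- chains of primes above an ideal -/
def ch : ℕ → Ideal A → Prop
  | 0, J => J ≠ ⊤
  | D+1, J => ∃ p : Ideal A, p.IsPrime ∧ J ≤ p ∧ ∃ K, p < K ∧ ch D K

lemma ch_anti : ∀ (D : ℕ) {J K : Ideal A}, J ≤ K → ch D K → ch D J
  | 0, _, _, h, hk => fun e => hk (top_le_iff.1 (e ▸ h))
  | _+1, _, _, h, ⟨p, hp, hK, r⟩ => ⟨p, hp, h.trans hK, r⟩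

lemma ch_of_series : ∀ (D : ℕ) (s : LTSeries (PrimeSpectrum A)), s.length = D → ch D s.head.asIdeal
  | 0, s, _ => s.head.2.ne_top
  | D+1, s, h => by
    refine ⟨s.head.asIdeal, s.head.2, le_rfl, (s.tail (by omega)).head.asIdeal, ?_,
      ch_of_series D (s.tail (by omega)) (by simp [h])⟩
    rw [RelSeries.head_tail]
    exact s.strictMono (by
      rw [Fin.lt_def]
      change 0 < 1 % (s.length + 1)
      rw [Nat.mod_eq_of_lt (by omega)]; omega)

lemma ch_of_dim {D : ℕ} (h : (D : WithBot ℕ∞) ≤ ringKrullDim A) : ch D (⊥ : Ideal A) := by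
  obtain ⟨s, hs⟩ := Order.le_krullDim_iff.1 h
  exact ch_anti D bot_le (ch_of_series D s hs)

lemma artin_rees_colon [IsNoetherianRing A] (n p : Ideal A) [p.IsPrime] {x : A} (hx : x ∉ p) :
    ∃ c0, ∀ k f, x * f ∈ p ⊔ n ^ (k + c0) → f ∈ p ⊔ n ^ k := by
  have hreg : IsSMulRegular (A ⧸ p) x :=
    (smulReg_quot_iff p x).2 fun f hf => (Ideal.IsPrime.mem_or_mem ‹_› hf).resolve_left hx
  obtain ⟨c0, hc⟩ := Ideal.exists_pow_inf_eq_pow_smul n (LinearMap.range (LinearMap.lsmul A (A ⧸ p) x))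
  have key : ∀ k (f : A), Ideal.Quotient.mk p f ∈ (n ^ k • ⊤ : Submodule A (A ⧸ p)) ↔ f ∈ p ⊔ n ^ k := by
    intro k f
    have : (n ^ k • ⊤ : Submodule A (A ⧸ p)) = Submodule.map p.mkQ (n^k) := by
      rw [← Submodule.range_mkQ p, LinearMap.range_eq_map, ← Submodule.map_smul'']
      simp
    rw [this]
    have := Submodule.comap_map_mkQ p (n^k)
    rw [← this]; rfl
  refine ⟨c0, fun k f hf => ?_⟩
  rw [← key] at hf ⊢
  have h1 : Ideal.Quotient.mk p (x * f) ∈ (n ^ (k+c0) • ⊤ : Submodule A (A ⧸ p)) ⊓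
    (LinearMap.range (LinearMap.lsmul A (A ⧸ p) x)) := ⟨hf, ⟨Ideal.Quotient.mk p f, rfl⟩⟩
  rw [hc _ (by omega), Nat.add_sub_cancel] at h1
  have h2 := smul_mono_right (n^k) (inf_le_right : (n ^ c0 • ⊤ : Submodule A (A ⧸ p)) ⊓ _ ≤ _) h1
  rw [LinearMap.range_eq_map, ← Submodule.map_smul''] at h2
  obtain ⟨g, hg, hg'⟩ := h2
  have : g = Ideal.Quotient.mk p f := hreg hg'
  rwa [← this]

theorem len_lower [IsLocalRing A] [IsNoetherianRing A] (D : ℕ) : ∀ J : Ideal A, ch D J →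
    ∃ c, ∀ l : ℕ, (l.choose D : ℕ∞) ≤ len (J ⊔ maximalIdeal A ^ (c * (l + 1))) := by
  induction D with
  | zero =>
    intro J hJ
    refine ⟨1, fun l => ?_⟩
    rw [Nat.choose_zero_right, Nat.cast_one, Order.one_le_iff_ne_zero]
    intro h
    have : Nontrivial (A ⧸ J ⊔ maximalIdeal A ^ (1 * (l + 1))) := by
      rw [Ideal.Quotient.nontrivial_iff]
      intro h
      have h1 : J ⊔ maximalIdeal A ^ (1 * (l + 1)) ≤ maximalIdeal A :=
        sup_le (le_maximalIdeal hJ) (Ideal.pow_le_self (by omega))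
      rw [h] at h1
      exact (Ideal.IsPrime.ne_top' : maximalIdeal A ≠ ⊤) (top_le_iff.1 h1)
    exact Module.length_pos.ne' h
  | succ D ih =>
    rintro J ⟨p, hp, hJp, K, hpK, hK⟩
    obtain ⟨x, hxK, hxp⟩ := SetLike.exists_of_lt hpK
    obtain ⟨c', hc'⟩ := ih (p ⊔ Ideal.span {x})
      (ch_anti D (sup_le hpK.le (by rw [Ideal.span_le]; simpa using hxK)) hK)
    obtain ⟨c0, hc0⟩ := artin_rees_colon (maximalIdeal A) p hxp
    let c := max c0 c'
    refine ⟨c, fun l => ?_⟩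
    refine le_trans ?_ (len_anti (sup_le_sup_right hJp _))
    induction l with
    | zero => simp
    | succ l ihl =>
      set m := maximalIdeal A
      let Kc : Ideal A := Submodule.comap (LinearMap.lsmul A A x) (p ⊔ m ^ (c * (l + 1 + 1)))
      have h1 : len (p ⊔ m ^ (c * (l + 1 + 1))) = len Kc + _ := len_colon (K := Kc) (x := x) (fun f => Iff.rfl)
      rw [h1, Nat.choose_succ_succ, Nat.cast_add, add_comm]
      refine add_le_add (ihl.trans (len_anti ?_)) ?_
      · intro f hf
        have hf' : x * f ∈ p ⊔ m ^ (c * (l + 1 + 1)) := hf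
        have hle : p ⊔ m ^ (c * (l + 1 + 1)) ≤ p ⊔ m ^ (c * (l + 1) + c0) := by
          refine sup_le_sup_left (Ideal.pow_le_pow_right ?_) p
          have : c0 ≤ c := le_max_left _ _
          rw [mul_add c (l+1) 1]
          omega
        exact hc0 _ f (hle hf')
      · refine le_trans ?_ ((hc' (l+1)).trans (len_anti ?_))
        · exact_mod_cast Nat.choose_le_choose D (Nat.le_succ l)
        · rw [sup_right_comm]
          exact sup_le_sup_left (Ideal.pow_le_pow_right (Nat.mul_le_mul_right _ (le_max_right _ _))) _
end
end SuppLC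

namespace SuppLC

section
variable {S : Type u} [CommRing S]

lemma len_strict_loc [IsLocalRing S] [IsNoetherianRing S] (P : Ideal S) [P.IsPrime] {x : S} (hx : x ∈ maximalIdeal S)
    (hxP : x ∉ P) : StrictMono (fun J : Ideal (Localization.AtPrime P) =>
      J.comap (algebraMap S (Localization.AtPrime P)) ⊔ Ideal.span {x}) := by
  intro J K hJK
  have hle : J.comap (algebraMap S (Localization.AtPrime P)) ≤ K.comap (algebraMap S (Localization.AtPrime P)) :=
    Ideal.comap_mono hJK.le
  refine lt_of_le_of_ne (sup_le_sup_right hle _) ?_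
  intro he
  simp only at he
  apply hJK.not_ge
  have hK : K.comap (algebraMap S (Localization.AtPrime P)) ≤ J.comap (algebraMap S (Localization.AtPrime P)) := by
    refine Submodule.le_of_le_smul_of_le_jacobson_bot (I := maximalIdeal S) (IsNoetherian.noetherian _) 
      (IsLocalRing.jacobson_eq_maximalIdeal ⊥ bot_ne_top).ge ?_
    intro a ha
    have ha' : a ∈ J.comap (algebraMap S (Localization.AtPrime P)) ⊔ Ideal.span {x} := by
      rw [he]; exact Ideal.mem_sup_left ha
    obtain ⟨b, hb, c, hc, rfl⟩ := Submodule.mem_sup.1 ha'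
    obtain ⟨c, rfl⟩ := Ideal.mem_span_singleton.1 hc
    refine Submodule.add_mem_sup hb (Submodule.smul_mem_smul hx ?_)
    have h1 : x * c ∈ K.comap (algebraMap S (Localization.AtPrime P)) := by
      have := sub_mem ha (hle hb)
      simpa using this
    rw [Ideal.mem_comap, map_mul] at h1
    exact (Ideal.unit_mul_mem_iff_mem _ (IsLocalization.map_units (Localization.AtPrime P) (⟨x, hxP⟩ : P.primeCompl))).1 h1
  have := Ideal.map_mono (f := algebraMap S (Localization.AtPrime P)) hK
  rwa [IsLocalization.map_under P.primeCompl, IsLocalization.map_under P.primeCompl] at this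

lemma len_pow {K : Ideal S} {x : S} (hK : ∀ f, x * f ∈ K → f ∈ K) (j : ℕ) :
    len (K ⊔ Ideal.span {x ^ j}) = j * len (K ⊔ Ideal.span {x}) := by
  induction j with
  | zero =>
    have : K ⊔ Ideal.span {x ^ 0} = ⊤ := by simp
    rw [this, Nat.cast_zero, zero_mul, len, Module.length_eq_zero_iff]
    exact Ideal.Quotient.subsingleton_iff.2 rfl
  | succ j ih =>
    rw [len_colon (K := K ⊔ Ideal.span {x ^ j}) (x := x), ih, Nat.cast_add, add_mul, Nat.cast_one, one_mul]
    · congr 2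
      apply le_antisymm
      · refine sup_le (sup_le le_sup_left (le_sup_of_le_right ?_)) le_sup_right
        rw [Ideal.span_singleton_le_span_singleton]; exact dvd_pow_self x (by omega)
      · exact sup_le_sup_right le_sup_left _
    · intro f
      constructor
      · intro hf
        obtain ⟨a, ha, b, hb, rfl⟩ := Submodule.mem_sup.1 hf
        obtain ⟨b, rfl⟩ := Ideal.mem_span_singleton.1 hb
        rw [mul_add]
        refine Submodule.add_mem_sup (Ideal.mul_mem_left _ _ ha) ?_
        rw [Ideal.mem_span_singleton]
        exact ⟨b, by ring⟩
      · intro hf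
        obtain ⟨a, ha, b, hb, hab⟩ := Submodule.mem_sup.1 hf
        obtain ⟨b, rfl⟩ := Ideal.mem_span_singleton.1 hb
        have h1 : x * (f - x ^ j * b) ∈ K := by
          have : x * (f - x ^ j * b) = a := by
            rw [mul_sub, ← hab]; ring
          rwa [this]
        have := hK _ h1
        have h2 : f = (f - x ^ j * b) + x ^ j * b := by ring
        rw [h2]
        exact Submodule.add_mem_sup this (Ideal.mem_span_singleton.2 ⟨b, rfl⟩)

lemma len_loc [IsLocalRing S] [IsNoetherianRing S] (P : Ideal S) [P.IsPrime] {x : S} (hx : x ∈ maximalIdeal S)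
    (hxP : x ∉ P) (J : Ideal (Localization.AtPrime P)) (j : ℕ) :
    j * len J ≤ len (J.comap (algebraMap S (Localization.AtPrime P)) ⊔ Ideal.span {x ^ j}) := by
  rw [len_pow]
  · gcongr
    rw [len, len, Module.length_quotient, Module.length_quotient]
    exact Order.coheight_le_coheight_apply_of_strictMono _ (len_strict_loc P hx hxP) J
  · intro f hf
    rw [Ideal.mem_comap, map_mul] at hf
    exact (Ideal.unit_mul_mem_iff_mem _ (IsLocalization.map_units (Localization.AtPrime P) (⟨x, hxP⟩ : P.primeCompl))).1 hf

lemma len_le_add (J : Ideal S) (K : Ideal S) (x : S) (h : ∀ f ∈ K, x * f ∈ J) :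
    len J ≤ len K + len (J ⊔ Ideal.span {x}) := by
  rw [len_colon (J := J) (K := Submodule.comap (LinearMap.lsmul S S x) J) (x := x) (fun f => Iff.rfl)]
  gcongr
  exact len_anti fun f hf => h f hf

lemma len_max [IsLocalRing S] : len (maximalIdeal S) = 1 := by
  have : IsSimpleModule S (S ⧸ maximalIdeal S) := by
    rw [isSimpleModule_iff_isCoatom]
    exact (inferInstance : (maximalIdeal S).IsMaximal).out
  exact Module.length_eq_one _ _

lemma len_top : len (⊤ : Ideal S) = 0 := by
  rw [len, Module.length_eq_zero_iff]
  exact Ideal.Quotient.subsingleton_iff.2 rfl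

lemma len_sup_pow_le [IsLocalRing S] (t : Finset S) : ∀ (b : Ideal S),
    b ⊔ Ideal.span (t : Set S) = maximalIdeal S → ∀ T : ℕ, len (b ⊔ maximalIdeal S ^ T) ≤ (T ^ t.card : ℕ) := by
  classical
  induction t using Finset.induction_on with
  | empty =>
    intro b hb T
    have hb' : b = maximalIdeal S := by simpa using hb
    simp only [Finset.card_empty, pow_zero, Nat.cast_one]
    rw [← len_max (S := S)]
    exact len_anti (le_sup_of_le_left hb'.ge)
  | insert x t hx ih =>
    intro b hb T
    rw [Finset.card_insert_of_notMem hx]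
    rw [Finset.coe_insert, Ideal.span_insert, ← sup_assoc] at hb
    have hxm : x ∈ maximalIdeal S := by
      rw [← hb]; exact Ideal.mem_sup_left (Ideal.mem_sup_right (Ideal.mem_span_singleton_self x))
    induction T with
    | zero => simp [len_top]
    | succ T ihT =>
      have h1 := len_le_add (b ⊔ maximalIdeal S ^ (T+1)) (b ⊔ maximalIdeal S ^ T) x (by
        intro f hf
        obtain ⟨a, ha, c, hc, rfl⟩ := Submodule.mem_sup.1 hf
        rw [mul_add]
        refine Submodule.add_mem_sup (Ideal.mul_mem_left _ _ ha) ?_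
        rw [pow_succ']
        exact Ideal.mul_mem_mul hxm hc)
      have h2 := ih (b ⊔ Ideal.span {x}) hb (T+1)
      rw [sup_right_comm] at h2
      refine h1.trans ((add_le_add ihT h2).trans ?_)
      have : T ^ (t.card + 1) + (T + 1) ^ t.card ≤ (T+1) ^ (t.card + 1) := by
        have := Nat.pow_le_pow_left (Nat.le_succ T) t.card
        rw [pow_succ, pow_succ]
        nlinarith
      exact_mod_cast this

lemma len_pow_add [IsLocalRing S] {N : ℕ} {s : Finset S} (hs : Ideal.span (s : Set S) = maximalIdeal S)
    (hc : s.card = N + 1) (T t : ℕ) :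
    len (maximalIdeal S ^ (T + t)) ≤ len (maximalIdeal S ^ T) + (t * (T + t) ^ N : ℕ) := by
  classical
  obtain ⟨x, hx⟩ := Finset.card_pos.1 (by omega : 0 < s.card)
  have hxm : x ∈ maximalIdeal S := by rw [← hs]; exact Ideal.subset_span hx
  induction t with
  | zero => simp
  | succ t ih =>
    have h1 := len_le_add (maximalIdeal S ^ (T+t+1)) (maximalIdeal S ^ (T+t)) x (by
      intro f hf
      rw [pow_succ']
      exact Ideal.mul_mem_mul hxm hf)
    have h2 := len_sup_pow_le (s.erase x) (Ideal.span {x}) (by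
      rw [← hs, ← Ideal.span_insert, ← Finset.coe_insert, Finset.insert_erase hx]) (T+t+1)
    rw [sup_comm] at h1
    have h3 := h1.trans (add_le_add ih h2)
    rw [Finset.card_erase_of_mem hx, hc, Nat.add_sub_cancel, add_assoc (len _)] at h3
    refine h3.trans (add_le_add le_rfl ?_)
    have : t * (T + t) ^ N + (T + t + 1) ^ N ≤ (t+1) * (T + (t+1)) ^ N := by
      have := Nat.pow_le_pow_left (Nat.le_succ (T+t)) N
      rw [← add_assoc]
      nlinarith
    exact_mod_cast this

lemma len_upper [IsRegularLocalRing S] {N : ℕ} (hN : ringKrullDim S = (N + 1 : ℕ)) {t : ℕ} {f : S}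
    (hf : f ∉ maximalIdeal S ^ (t + 1)) (T : ℕ) :
    len (maximalIdeal S ^ (T + t) ⊔ Ideal.span {f}) ≤ (t * (T + t) ^ N : ℕ) := by
  obtain ⟨s, hs, hc⟩ := exists_gens hN
  have h1 := len_pow_add hs hc T t
  rw [len_colon (J := maximalIdeal S ^ (T+t)) (K := Submodule.comap (LinearMap.lsmul S S f) (maximalIdeal S ^ (T+t)))
    (x := f) (fun f => Iff.rfl)] at h1
  have hle : Submodule.comap (LinearMap.lsmul S S f) (maximalIdeal S ^ (T+t)) ≤ maximalIdeal S ^ T := by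
    intro g hg
    have hg' : f * g ∈ maximalIdeal S ^ (T + t) := hg
    rcases T with _ | T
    · simp
    · by_contra hcon
      apply reg_ord (N+1) S hN _ t T f g rfl hf hcon
      convert hg' using 2
      omega
  have h2 := (add_le_add_left (len_anti hle) _).trans h1
  have h3 := len_sup_pow_le s ⊥ (by rw [bot_sup_eq, hs]) T
  rw [bot_sup_eq] at h3
  have hfin : len (maximalIdeal S ^ T) ≠ ⊤ := ne_top_of_le_ne_top (ENat.natCast_ne_top _) h3
  exact (ENat.add_le_add_iff_left hfin).1 h2
end
end SuppLC

namespace SuppLC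

section
variable {S : Type u} [CommRing S]

lemma growth_contra (D t c0 c1 : ℕ)
    (h : ∀ L : ℕ, L * L.choose D ≤ t * (c0 * (c1 * (L + 1) + L) + t) ^ D) : False := by
  set a := c0 * (c1 * (D + 2) + (D + 1)) + t with ha
  set M := D.factorial * (t * a ^ D) + 1 with hM
  have hM1 : 1 ≤ M := by omega
  have h1 := h (M + D)
  have h2 : c0 * (c1 * (M + D + 1) + (M + D)) + t ≤ a * M := by
    have e1 : M + D + 1 ≤ (D + 2) * M := by nlinarith
    have e2 : M + D ≤ (D + 1) * M := by nlinarith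
    have e3 : t ≤ t * M := by nlinarith
    calc c0 * (c1 * (M + D + 1) + (M + D)) + t ≤ c0 * (c1 * ((D + 2) * M) + (D + 1) * M) + t * M := by gcongr
      _ = a * M := by rw [ha]; ring
  have h3 : M ^ D ≤ D.factorial * (M + D).choose D := by
    have := Nat.pow_sub_le_descFactorial (M + D) D
    rw [Nat.descFactorial_eq_factorial_mul_choose] at this
    refine le_trans (Nat.pow_le_pow_left ?_ D) this
    omega
  have h4 : t * (c0 * (c1 * (M + D + 1) + (M + D)) + t) ^ D ≤ t * (a * M) ^ D := by gcongr
  have h5 : M * M ^ D ≤ (D.factorial * (t * a ^ D)) * M ^ D := by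
    calc M * M ^ D ≤ (M + D) * (D.factorial * (M + D).choose D) := by gcongr; omega
      _ = D.factorial * ((M + D) * (M + D).choose D) := by ring
      _ ≤ D.factorial * (t * (a * M) ^ D) := Nat.mul_le_mul_left _ (h1.trans h4)
      _ = _ := by rw [mul_pow]; ring
  have h6 := Nat.le_of_mul_le_mul_right h5 (by positivity)
  omega

theorem symb_le [IsRegularLocalRing S] (P : Ideal S) [P.IsPrime]
    (hP : P ≠ maximalIdeal S) (hmax : ∀ Q : Ideal S, Q.IsPrime → P ≤ Q → Q = P ∨ Q = maximalIdeal S) (t : ℕ) :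
    ∃ l : ℕ, ((P ^ l).map (algebraMap S (Localization.AtPrime P))).comap (algebraMap S (Localization.AtPrime P))
      ≤ maximalIdeal S ^ (t + 1) := by
  obtain ⟨N, hN⟩ := exists_dim S
  have hPm : P ≤ maximalIdeal S := le_maximalIdeal Ideal.IsPrime.ne_top'
  rcases N with _ | N
  · exact absurd (by rw [max_eq_bot_of_dim_zero hN] at hPm ⊢; exact le_bot_iff.1 hPm) hP
  obtain ⟨x, hx, hxP⟩ := SetLike.exists_of_lt (lt_of_le_of_ne hPm hP)
  have hd := height_coheight_one hN P hP hmax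
  rw [Nat.add_sub_cancel] at hd
  obtain ⟨c1, hc1⟩ := len_lower N ⊥ (ch_of_dim hd)
  obtain ⟨c0, hc0⟩ : ∃ c0, maximalIdeal S ^ c0 ≤ P ⊔ Ideal.span {x} := by
    apply Ideal.exists_pow_le_of_le_radical_of_fg _ (IsNoetherian.noetherian _)
    rw [Ideal.radical_eq_sInf]
    refine le_sInf ?_
    rintro Q ⟨hQ, hQp⟩
    rcases hmax Q hQp (le_sup_left.trans hQ) with h | h
    · exact absurd (h ▸ hQ (Ideal.mem_sup_right (Ideal.mem_span_singleton_self x))) hxP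
    · exact h.ge
  by_contra! hcon
  apply growth_contra N t c0 c1
  intro L
  set l' := c1 * (L + 1)
  obtain ⟨f, hf, hfm⟩ := SetLike.not_le_iff_exists.1 (hcon l')
  set T := c0 * (l' + L)
  have h1 := hc1 L
  rw [bot_sup_eq, ← Localization.AtPrime.map_eq_maximalIdeal, ← Ideal.map_pow] at h1
  have h2 := len_loc P hx hxP ((P ^ l').map (algebraMap S (Localization.AtPrime P))) L
  have h3 := len_upper hN hfm T
  have h4 : maximalIdeal S ^ (T + t) ⊔ Ideal.span {f} ≤ ((P ^ l').map (algebraMap S (Localization.AtPrime P))).comap (algebraMap S (Localization.AtPrime P)) ⊔ Ideal.span {x ^ L} := by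
    refine sup_le ?_ (le_sup_of_le_left (by rw [Ideal.span_le]; simpa using hf))
    refine (Ideal.pow_le_pow_right (Nat.le_add_right T t)).trans ?_
    rw [pow_mul]
    refine (Ideal.pow_right_mono hc0 _).trans (Ideal.sup_pow_add_le_pow_sup_pow.trans ?_)
    rw [Ideal.span_singleton_pow]
    exact sup_le_sup_right Ideal.le_comap_map _
  have h5 : ((L * L.choose N : ℕ) : ℕ∞) ≤ (t * (T + t) ^ N : ℕ) := by
    rw [Nat.cast_mul]
    refine le_trans ?_ (h2.trans ((len_anti h4).trans h3))
    gcongr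
  exact_mod_cast h5
end
end SuppLC

namespace SuppLC

section
variable {S : Type u} [CommRing S] [IsLocalRing S]

/-- saturation w.r.t. the maximal ideal -/
def sat (J : Ideal S) : Ideal S where
  carrier := {f | ∃ e : ℕ, ∀ a ∈ maximalIdeal S ^ e, a * f ∈ J}
  zero_mem' := ⟨0, fun a _ => by simp⟩
  add_mem' := by
    rintro f g ⟨e, he⟩ ⟨e', he'⟩
    refine ⟨e + e', fun a ha => ?_⟩
    rw [mul_add]
    exact J.add_mem (he a (Ideal.pow_le_pow_right (Nat.le_add_right _ _) ha))
      (he' a (Ideal.pow_le_pow_right (Nat.le_add_left _ _) ha))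
  smul_mem' := by
    rintro c f ⟨e, he⟩
    refine ⟨e, fun a ha => ?_⟩
    have : a * (c • f) = c * (a * f) := by rw [smul_eq_mul]; ring
    rw [this]; exact J.mul_mem_left _ (he a ha)

lemma le_sat (J : Ideal S) : J ≤ sat J := fun f hf => ⟨0, fun a _ => J.mul_mem_left a hf⟩

lemma sat_mono {J K : Ideal S} (h : J ≤ K) : sat J ≤ sat K := by
  rintro f ⟨e, he⟩; exact ⟨e, fun a ha => h (he a ha)⟩

lemma exists_pow_mul_sat [IsNoetherianRing S] (J : Ideal S) : ∃ e, maximalIdeal S ^ e * sat J ≤ J := by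
  have hfg : (sat J).FG := IsNoetherian.noetherian _
  suffices H : ∀ t : Finset S, (∀ f ∈ t, f ∈ sat J) → ∃ e, ∀ f ∈ t, ∀ a ∈ maximalIdeal S ^ e, a * f ∈ J by
    obtain ⟨t, ht⟩ := hfg
    obtain ⟨e, he⟩ := H t (fun f hf => by rw [← ht]; exact Submodule.subset_span hf)
    refine ⟨e, ?_⟩
    rw [Ideal.mul_le]
    intro a ha f hf
    rw [← ht] at hf
    induction hf using Submodule.span_induction with
    | mem f hf => exact he f hf a ha
    | zero => simp
    | add f g _ _ h1 h2 => rw [mul_add]; exact J.add_mem h1 h2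
    | smul c f _ h1 =>
      have : a * (c • f) = c * (a * f) := by rw [smul_eq_mul]; ring
      rw [this]; exact J.mul_mem_left _ h1
  classical
  intro t
  induction t using Finset.induction_on with
  | empty => intro _; exact ⟨0, by simp⟩
  | insert x t hx ih =>
    intro h
    obtain ⟨e, he⟩ := ih (fun f hf => h f (Finset.mem_insert_of_mem hf))
    obtain ⟨e', he'⟩ := h x (Finset.mem_insert_self _ _)
    refine ⟨e + e', fun f hf a ha => ?_⟩
    rcases Finset.mem_insert.1 hf with rfl | hf
    · exact he' a (Ideal.pow_le_pow_right (Nat.le_add_left _ _) ha)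
    · exact he f hf a (Ideal.pow_le_pow_right (Nat.le_add_right _ _) ha)

lemma sat_of_mul [IsNoetherianRing S] {J : Ideal S} {f : S} (h : ∀ a ∈ maximalIdeal S, a * f ∈ sat J) : f ∈ sat J := by
  obtain ⟨e, he⟩ := exists_pow_mul_sat J
  refine ⟨e + 1, fun a ha => ?_⟩
  rw [pow_succ] at ha
  refine Submodule.mul_induction_on ha (fun b hb c hc => ?_) (fun b c hb hc => by rw [add_mul]; exact J.add_mem hb hc)
  rw [mul_assoc]
  exact he (Ideal.mul_mem_mul hb (h c hc))

lemma exists_reg_sat [IsNoetherianRing S] (J : Ideal S) :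
    ∃ x ∈ maximalIdeal S, IsSMulRegular (S ⧸ sat J) x := by
  by_contra! hcon
  have hsub : (maximalIdeal S : Set S) ⊆ ⋃ p ∈ associatedPrimes S (S ⧸ sat J), (p : Set S) := by
    rw [biUnion_associatedPrimes_eq_compl_regular]
    exact fun x hx => hcon x hx
  rw [Ideal.subset_union_prime_finite (associatedPrimes.finite S (S ⧸ sat J)) ⊥ ⊥ (fun p hp _ _ => hp.1)] at hsub
  obtain ⟨p, hp, hle⟩ := hsub
  have hpm : p = maximalIdeal S := le_antisymm (le_maximalIdeal hp.1.ne_top) hle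
  rw [hpm] at hp
  obtain ⟨f, hf⟩ := (isAssociatedPrime_iff_exists_injective_linearMap _ _).1 hp |>.2
  obtain ⟨g, hg⟩ := Ideal.Quotient.mk_surjective (f 1)
  have h1 : g ∈ sat J := by
    apply sat_of_mul
    intro a ha
    rw [← Ideal.Quotient.eq_zero_iff_mem]
    have : Ideal.Quotient.mk (sat J) (a * g) = a • f 1 := by rw [← hg]; rfl
    rw [this, ← map_smul]
    have : a • (1 : S ⧸ maximalIdeal S) = 0 := by
      change Ideal.Quotient.mk _ (a * 1) = 0
      rw [mul_one]; exact Ideal.Quotient.eq_zero_iff_mem.2 ha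
    rw [this, map_zero]
  rw [← Ideal.Quotient.eq_zero_iff_mem, hg] at h1
  have := hf (h1.trans (map_zero f).symm)
  exact one_ne_zero this

end

section
variable {S : Type u} [CommRing S]
theorem sat_pow_le [IsRegularLocalRing S] (I P : Ideal S) [P.IsPrime] (hIP : I ≤ P)
    (hP : P ≠ maximalIdeal S) (hmax : ∀ Q : Ideal S, Q.IsPrime → P ≤ Q → Q = P ∨ Q = maximalIdeal S) (k : ℕ) :
    ∃ l, k ≤ l ∧ sat (I ^ l) ≤ I ^ k := by
  have hPm : P ≤ maximalIdeal S := le_maximalIdeal Ideal.IsPrime.ne_top'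
  obtain ⟨y, hy, hyP⟩ := SetLike.exists_of_lt (lt_of_le_of_ne hPm hP)
  obtain ⟨e, he⟩ := exists_pow_mul_sat (I ^ k)
  obtain ⟨c, hc⟩ := Ideal.exists_pow_inf_eq_pow_smul (maximalIdeal S) (sat (I ^ k))
  obtain ⟨l, hl⟩ := symb_le P hP hmax (c + e)
  refine ⟨max k l, le_max_left _ _, fun f hf => ?_⟩
  have h1 : f ∈ maximalIdeal S ^ (c + e) := by
    refine Ideal.pow_le_pow_right (Nat.le_succ _) (hl ?_)
    obtain ⟨e', he'⟩ := hf
    have h2 := he' (y ^ e') (Ideal.pow_mem_pow hy _)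
    have h3 : y ^ e' * f ∈ P ^ l :=
      (Ideal.pow_right_mono hIP _).trans (Ideal.pow_le_pow_right (le_max_right k l)) h2
    rw [Ideal.mem_comap]
    have h4 := Ideal.mem_map_of_mem (algebraMap S (Localization.AtPrime P)) h3
    rw [map_mul, map_pow] at h4
    exact (Ideal.unit_mul_mem_iff_mem _ ((IsLocalization.map_units (Localization.AtPrime P) (⟨y, hyP⟩ : P.primeCompl)).pow e')).1 h4
  have h2 : f ∈ sat (I ^ k) := sat_mono (Ideal.pow_le_pow_right (le_max_left k l)) hf
  have h3 : f ∈ (maximalIdeal S ^ (c + e) • ⊤ : Ideal S) ⊓ sat (I ^ k) := ⟨by simpa using h1, h2⟩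
  rw [hc _ (by omega), Nat.add_sub_cancel_left] at h3
  have hle : maximalIdeal S ^ e • ((maximalIdeal S ^ c • ⊤ : Ideal S) ⊓ sat (I ^ k)) ≤
      maximalIdeal S ^ e • sat (I ^ k) := Submodule.smul_mono le_rfl inf_le_right
  exact he (hle h3)

theorem PD_sat [IsRegularLocalRing S] {N : ℕ} (hN : ringKrullDim S = N) (J : Ideal S) :
    PD S (S ⧸ sat J) (N - 1) := by
  obtain ⟨x, hx, hreg⟩ := exists_reg_sat J
  exact PD_pred_of_quot hx hreg (PD_all (PD_reg hN) _)
end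
end SuppLC

namespace SuppLC

section
variable {R : Type u} [CommRing R]

lemma factor_free [IsNoetherianRing R] (q : Ideal R) [q.IsPrime] (M F : Type u) [AddCommGroup M] [Module R M]
    [Module.Finite R M] [AddCommGroup F] [Module R F] [Module.Finite R F] (p : F →ₗ[R] M)
    (hp : Function.Surjective p)
    (h : Module.Projective (Localization.AtPrime q) (LocalizedModule q.primeCompl M)) :
    ∃ s ∉ q, ∃ i : M →ₗ[R] F, p ∘ₗ i = s • LinearMap.id := by
  let fM := LocalizedModule.mkLinearMap q.primeCompl M
  let fF := LocalizedModule.mkLinearMap q.primeCompl F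
  let pq := IsLocalizedModule.mapExtendScalars q.primeCompl fF fM (Localization.AtPrime q) p
  have hpq : Function.Surjective pq := IsLocalizedModule.map_surjective q.primeCompl fF fM p hp
  obtain ⟨σ, hσ⟩ := Module.projective_lifting_property pq LinearMap.id hpq
  have : Module.FinitePresentation R M := Module.finitePresentation_of_finite R M
  obtain ⟨i, s, his⟩ := Module.FinitePresentation.exists_lift_of_isLocalizedModule q.primeCompl fF
    ((σ.restrictScalars R) ∘ₗ fM)
  have h1 : fM ∘ₗ (p ∘ₗ i) = fM ∘ₗ ((s : R) • LinearMap.id) := by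
    ext x
    have e1 : fF (i x) = (s : R) • σ (fM x) := LinearMap.congr_fun his x
    have e2 : ∀ y, pq (fF y) = fM (p y) := fun y => IsLocalizedModule.map_apply q.primeCompl fF fM p y
    have e3 : pq (σ (fM x)) = fM x := LinearMap.congr_fun hσ (fM x)
    change fM (p (i x)) = fM ((s : R) • x)
    rw [← e2, e1, LinearMap.map_smul_of_tower, e3, map_smul]
  obtain ⟨t, ht⟩ := Module.Finite.exists_smul_of_comp_eq_of_isLocalizedModule q.primeCompl fM _ _ h1
  refine ⟨t * s, (t * s).2, (t : R) • i, ?_⟩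
  rw [LinearMap.comp_smul, mul_smul]
  exact ht

lemma PD_locker (q : Ideal R) [q.IsPrime] {A B C : Type u} [AddCommGroup A] [Module R A] [AddCommGroup B] [Module R B]
    [AddCommGroup C] [Module R C] [Module.Projective R B] {f : A →ₗ[R] B} {g : B →ₗ[R] C} (hf : Function.Injective f)
    (hg : Function.Surjective g) (h : Function.Exact f g) (n : ℕ)
    (hC : PD (Localization.AtPrime q) (LocalizedModule q.primeCompl C) (n+1)) :
    PD (Localization.AtPrime q) (LocalizedModule q.primeCompl A) n := by
  let fA := LocalizedModule.mkLinearMap q.primeCompl A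
  let fB := LocalizedModule.mkLinearMap q.primeCompl B
  let fC := LocalizedModule.mkLinearMap q.primeCompl C
  have hB : PD (Localization.AtPrime q) (LocalizedModule q.primeCompl B) n :=
    PD_loc q.primeCompl _ n _ _ fB (PD_proj n)
  exact PD_1 (f := IsLocalizedModule.mapExtendScalars q.primeCompl fA fB (Localization.AtPrime q) f)
      (g := IsLocalizedModule.mapExtendScalars q.primeCompl fB fC (Localization.AtPrime q) g)
      (IsLocalizedModule.map_injective q.primeCompl fA fB _ hf) (IsLocalizedModule.map_surjective q.primeCompl fB fC _ hg)
      (IsLocalizedModule.map_exact q.primeCompl fA fB fC _ _ h) hB hC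

theorem ext_kill [IsNoetherianRing R] (q : Ideal R) [q.IsPrime] (Y : ModuleCat.{u} R) (n : ℕ) :
    ∀ (M : Type u) [AddCommGroup M] [Module R M] [Module.Finite R M],
    PD (Localization.AtPrime q) (LocalizedModule q.primeCompl M) n →
    ∃ s ∉ q, ∀ e : Abelian.Ext.{u} (ModuleCat.of R M) Y (n+1), s • e = 0 := by
  induction n with
  | zero =>
    intro M _ _ _ h
    rw [PD_zero] at h
    obtain ⟨k, p, hp⟩ := Module.Finite.exists_fin' R M
    obtain ⟨p', hp'⟩ : ∃ p' : (ULift.{u} (Fin k) → R) →ₗ[R] M, Function.Surjective p' :=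
      ⟨p ∘ₗ (LinearEquiv.funCongrLeft R R Equiv.ulift.symm).toLinearMap,
        hp.comp (LinearEquiv.funCongrLeft R R Equiv.ulift.symm).surjective⟩
    obtain ⟨s, hs, i, hi⟩ := factor_free q M _ p' hp' h
    refine ⟨s, hs, fun e => ?_⟩
    have key : s • e = (Abelian.Ext.mk₀ (ModuleCat.ofHom i ≫ ModuleCat.ofHom p')).comp e (zero_add _) := by
      rw [← ModuleCat.ofHom_comp, hi]
      have : ModuleCat.ofHom (s • LinearMap.id : M →ₗ[R] M) = s • 𝟙 (ModuleCat.of R M) := rfl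
      rw [this, Abelian.Ext.mk₀_smul, Abelian.Ext.smul_comp, Abelian.Ext.mk₀_id_comp]
    have : Projective (ModuleCat.of R (ULift.{u} (Fin k) → R)) := by
      rw [← IsProjective.iff_projective]; infer_instance
    rw [key, ← Abelian.Ext.mk₀_comp_mk₀, Abelian.Ext.comp_assoc (a₁₂ := 0) (a₂₃ := 0 + 1) _ _ _ _ _ (by omega),
      Abelian.Ext.eq_zero_of_projective ((Abelian.Ext.mk₀ (ModuleCat.ofHom p')).comp e _), Abelian.Ext.comp_zero]
    rfl
  | succ n ih =>
    intro M _ _ _ h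
    obtain ⟨k, p, hp⟩ := Module.Finite.exists_fin' R M
    obtain ⟨p', hp'⟩ : ∃ p' : (ULift.{u} (Fin k) → R) →ₗ[R] M, Function.Surjective p' :=
      ⟨p ∘ₗ (LinearEquiv.funCongrLeft R R Equiv.ulift.symm).toLinearMap,
        hp.comp (LinearEquiv.funCongrLeft R R Equiv.ulift.symm).surjective⟩
    let K := LinearMap.ker p'
    have hex : Function.Exact K.subtype p' := LinearMap.exact_subtype_ker_map p'
    have hinj : Function.Injective K.subtype := K.subtype_injective
    have hK := PD_locker q hinj hp' hex n h
    obtain ⟨s, hs, hk⟩ := ih K hK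
    refine ⟨s, hs, fun e => ?_⟩
    have hses := ses hinj hp' hex
    have : Projective (ModuleCat.of R (ULift.{u} (Fin k) → R)) := by
      rw [← IsProjective.iff_projective]; infer_instance
    obtain ⟨x, hx⟩ := Abelian.Ext.contravariant_sequence_exact₃ hses Y e
      (Abelian.Ext.eq_zero_of_projective (P := ModuleCat.of R (ULift.{u} (Fin k) → R)) _) (n₀ := n+1) (by omega)
    rw [← hx, ← Abelian.Ext.comp_smul, hk x, Abelian.Ext.comp_zero]

end
end SuppLC

namespace SuppLC

section
variable {R : Type u} [CommRing R]

lemma extMk_smul {X Y : ModuleCat.{u} R} (P : ProjectiveResolution X) {n : ℕ} (f : P.complex.X n ⟶ Y)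
    (hf : P.complex.d (n+1) n ≫ f = 0) (s : R) (hf' : P.complex.d (n+1) n ≫ (s • f) = 0) :
    P.extMk (s • f) (n+1) rfl hf' = s • P.extMk f (n+1) rfl hf := by
  rw [Abelian.Ext.smul_eq_comp_mk₀, ProjectiveResolution.extMk_comp_mk₀]
  congr 1

theorem old_kill (X Y : ModuleCat.{u} R) (n : ℕ) (s : R)
    (h : ∀ e : Abelian.Ext.{u} X Y (n+1), s • e = 0)
    (x : ((Ext R (ModuleCat.{u} R) (n+1)).obj (Opposite.op X)).obj Y) : s • x = 0 := by
  let P := ProjectiveResolution.of X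
  let e := P.isoExt (R := R) (n+1) Y
  let K := P.complex.linearYonedaObj R Y
  suffices H : ∀ z : K.homology (n+1), s • z = 0 by
    have h1 := H (e.hom x)
    rw [← map_smul] at h1
    have h2 : e.inv (e.hom (s • x)) = 0 := by rw [h1, map_zero]
    rw [← ModuleCat.comp_apply, e.hom_inv_id] at h2
    exact h2
  intro z
  obtain ⟨c, hc⟩ : ∃ c, (K.homologyπ (n+1)) c = z := 
    (ModuleCat.epi_iff_surjective _).1 inferInstance z
  let f : P.complex.X (n+1) ⟶ Y := K.iCycles (n+1) c
  have hf : P.complex.d (n+2) (n+1) ≫ f = 0 := by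
    have : K.d (n+1) (n+2) (K.iCycles (n+1) c) = 0 := by
      rw [← ModuleCat.comp_apply]; simp
    exact this
  have h1 := h (P.extMk f (n+2) rfl hf)
  have hf' : P.complex.d (n+2) (n+1) ≫ (s • f) = 0 := by simp [hf]
  rw [← extMk_smul P f hf s hf', ProjectiveResolution.extMk_eq_zero_iff P _ _ _ _ n rfl] at h1
  obtain ⟨g, hg⟩ : ∃ g : K.X n, K.d n (n+1) g = s • K.iCycles (n+1) c := h1
  have h2 : K.toCycles n (n+1) g = s • c := by
    apply (ModuleCat.mono_iff_injective (K.iCycles (n+1))).1 inferInstance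
    rw [← ModuleCat.comp_apply, HomologicalComplex.toCycles_i, map_smul]
    exact hg
  rw [← hc, ← map_smul, ← h2, ← ModuleCat.comp_apply]
  simp

end

section der
variable {R : Type u} [CommRing R] {C D : Type*} [Category* C] [Abelian C] [Linear R C] [EnoughProjectives C]
  [Category* D] [Abelian D] [Linear R D]

lemma homologyMap_smul' {K L : ChainComplex D ℕ} (s : R) (φ : K ⟶ L) (n : ℕ) :
    (HomologicalComplex.homologyFunctor D (ComplexShape.down ℕ) n).map (s • φ) =
      s • (HomologicalComplex.homologyFunctor D (ComplexShape.down ℕ) n).map φ :=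
  ShortComplex.homologyMap_smul ((HomologicalComplex.shortComplexFunctor D _ n).map φ) s

lemma leftDerived_smul (G : C ⥤ D) [G.Additive] [Functor.Linear R G] (n : ℕ) (s : R) {X X' : C} (f : X ⟶ X') :
    (G.leftDerived n).map (s • f) = s • (G.leftDerived n).map f := by
  let P := ProjectiveResolution.of X
  let Q := ProjectiveResolution.of X'
  let g := ProjectiveResolution.lift f P Q
  have hg : g ≫ Q.π = P.π ≫ (ChainComplex.single₀ _).map f := ProjectiveResolution.lift_commutes f P Q
  have hg' : (s • g) ≫ Q.π = P.π ≫ (ChainComplex.single₀ _).map (s • f) := by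
    rw [Linear.smul_comp, hg]
    ext1
    simp only [HomologicalComplex.smul_f_apply, HomologicalComplex.comp_f, ChainComplex.single₀_map_f_zero]
    exact (Linear.comp_smul _ _ _ _ _ _).symm
  rw [Functor.leftDerived_map_eq G n f g hg, Functor.leftDerived_map_eq G n (s • f) (s • g) hg']
  have h1 : (G.mapHomologicalComplex (ComplexShape.down ℕ)).map (s • g) = s • (G.mapHomologicalComplex _).map g :=
    Functor.map_smul _ _ _
  dsimp only [Functor.comp_map]
  rw [h1, homologyMap_smul', Linear.smul_comp, Linear.comp_smul]
end der

section lin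
variable {R : Type u} [CommRing R] {C : Type*} [Category* C] [Preadditive C] [Linear R C]

/-- linear structure on the opposite category -/
@[reducible] def linOp : Linear R Cᵒᵖ where
  homModule X Y :=
    { smul := fun r f => (r • f.unop).op
      one_smul := fun f => Quiver.Hom.unop_inj (one_smul R f.unop)
      mul_smul := fun a b f => Quiver.Hom.unop_inj (mul_smul a b f.unop)
      smul_zero := fun a => Quiver.Hom.unop_inj (smul_zero a)
      smul_add := fun a f g => Quiver.Hom.unop_inj (smul_add a f.unop g.unop)
      add_smul := fun a b f => Quiver.Hom.unop_inj (add_smul a b f.unop)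
      zero_smul := fun f => Quiver.Hom.unop_inj (zero_smul R f.unop) }
  smul_comp X Y Z r f g := Quiver.Hom.unop_inj (Linear.comp_smul Z.unop Y.unop X.unop g.unop r f.unop)
  comp_smul X Y Z f r g := Quiver.Hom.unop_inj (Linear.smul_comp Z.unop Y.unop X.unop r g.unop f.unop)
end lin

section
variable {R : Type u} [CommRing R]

attribute [local instance] linOp

theorem old_linear {X X' : ModuleCat.{u} R} (Y : ModuleCat.{u} R) (n : ℕ) (s : R) (f : X ⟶ X')
    (x : ((Ext R (ModuleCat.{u} R) n).obj (Opposite.op X')).obj Y) :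
    (((Ext R (ModuleCat.{u} R) n).map (s • f).op).app Y) x =
      s • (((Ext R (ModuleCat.{u} R) n).map f.op).app Y) x := by
  let G := ((linearYoneda R (ModuleCat.{u} R)).obj Y).rightOp
  have hG : Functor.Linear R G := ⟨fun f r => by
    apply Quiver.Hom.unop_inj
    ext (g : _ ⟶ _)
    change (r • f) ≫ g = r • (f ≫ g)
    rw [Linear.smul_comp]⟩
  have key : (G.leftDerived n).map (s • f) = s • (G.leftDerived n).map f := leftDerived_smul G n s f
  have := congrArg (fun φ => φ.unop x) key
  exact this
end
end SuppLC

namespace SuppLC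

section
variable {R : Type u} [CommRing R]

lemma factor_kill (Y : ModuleCat.{u} R) (n : ℕ) {A B C : ModuleCat.{u} R} (π : A ⟶ C) (α : A ⟶ B) (β : B ⟶ C)
    (s t : R) (h : s • π = α ≫ β) (ht : ∀ z : ((Ext R (ModuleCat.{u} R) n).obj (Opposite.op B)).obj Y, t • z = 0)
    (x : ((Ext R (ModuleCat.{u} R) n).obj (Opposite.op C)).obj Y) :
    (t * s) • (((Ext R (ModuleCat.{u} R) n).map π.op).app Y) x = 0 := by
  rw [mul_smul, ← old_linear, h, op_comp, Functor.map_comp, NatTrans.comp_app, ModuleCat.comp_apply,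
    ← map_smul, ht, map_zero]

lemma colim_tors {J : Type*} [Category* J] (q : Ideal R) [q.IsPrime] {D : J ⥤ ModuleCat.{u} R} {c : Limits.Cocone D}
    (hc : Limits.IsColimit c) (H : ∀ j (x : D.obj j), ∃ s ∉ q, s • (c.ι.app j) x = 0) (h : c.pt) :
    ∃ s ∉ q, s • h = 0 := by
  let T : Submodule R c.pt :=
    { carrier := {h | ∃ s ∉ q, s • h = 0}
      zero_mem' := ⟨1, q.primeCompl.one_mem, smul_zero _⟩
      add_mem' := by
        rintro a b ⟨s, hs, ha⟩ ⟨t, ht, hb⟩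
        refine ⟨s * t, q.primeCompl.mul_mem hs ht, ?_⟩
        rw [smul_add, mul_smul s t b, hb, mul_comm s t, mul_smul, ha, smul_zero, smul_zero, add_zero]
      smul_mem' := by
        rintro r a ⟨s, hs, ha⟩
        exact ⟨s, hs, by rw [smul_comm, ha, smul_zero]⟩ }
  have e : ModuleCat.ofHom T.mkQ = (0 : c.pt ⟶ ModuleCat.of R (c.pt ⧸ T)) := by
    apply hc.hom_ext
    intro j
    ext x
    have : T.mkQ (c.ι.app j x) = 0 := (Submodule.Quotient.mk_eq_zero T).2 (H j x)
    exact this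
  have h1 : T.mkQ h = 0 := congrArg (fun φ => φ.hom h) e
  exact (Submodule.Quotient.mk_eq_zero T).1 h1

lemma lc_aux [IsNoetherianRing R] (q : PrimeSpectrum R) (I : Ideal R) (n : ℕ) (Y : ModuleCat.{u} R)
    (H : ∀ k, ∃ l, ∃ (_ : k ≤ l), ∃ J : Ideal R, I ^ l ≤ J ∧ (∃ s ∉ q.asIdeal, ∀ x ∈ J, s * x ∈ I ^ k) ∧
      PD (Localization.AtPrime q.asIdeal) (LocalizedModule q.asIdeal.primeCompl (R ⧸ J)) n) (k : ℕ)
    (x : ((localCohomology.diagram (localCohomology.idealPowersDiagram I) (n+1)).obj (Opposite.op (Opposite.op k))).obj Y) :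
    ∃ s ∉ q.asIdeal, s • ((Limits.colimit.ι (localCohomology.diagram (localCohomology.idealPowersDiagram I) (n+1))
      (Opposite.op (Opposite.op k))).app Y) x = 0 := by
  let D := localCohomology.diagram (localCohomology.idealPowersDiagram I) (n+1)
  obtain ⟨l, hkl, J, hJ, ⟨s, hs, hsJ⟩, hPD⟩ := H k
  obtain ⟨t, ht, htk⟩ := ext_kill q.asIdeal Y n (R ⧸ J) hPD
  have hts : t * s ∉ q.asIdeal := fun hmem => (q.2.mem_or_mem hmem).elim ht hs
  refine ⟨t * s, hts, ?_⟩
  let w : (Opposite.op (Opposite.op k) : ℕᵒᵖᵒᵖ) ⟶ Opposite.op (Opposite.op l) := (homOfLE hkl).op.op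
  let π : ModuleCat.of R (R ⧸ I ^ l) ⟶ ModuleCat.of R (R ⧸ I ^ k) :=
    ModuleCat.ofHom <| Submodule.mapQ _ _ LinearMap.id (Ideal.pow_le_pow_right hkl)
  have hπ : D.map w = (Ext R (ModuleCat.{u} R) (n+1)).map π.op := rfl
  let α : ModuleCat.of R (R ⧸ I ^ l) ⟶ ModuleCat.of R (R ⧸ J) :=
    ModuleCat.ofHom <| Submodule.mapQ _ _ LinearMap.id hJ
  let β : ModuleCat.of R (R ⧸ J) ⟶ ModuleCat.of R (R ⧸ I ^ k) :=
    ModuleCat.ofHom <| Submodule.mapQ _ _ (s • LinearMap.id) (fun x hx => by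
      rw [Submodule.mem_comap]; exact hsJ x hx)
  have hfac : s • π = α ≫ β := by
    apply ModuleCat.hom_ext
    apply LinearMap.ext
    intro x
    obtain ⟨x, rfl⟩ := Ideal.Quotient.mk_surjective x
    rfl
  have e1 := factor_kill Y (n+1) π α β s t hfac (old_kill _ Y n t htk) x
  have e2 : (Limits.colimit.ι D (Opposite.op (Opposite.op k))).app Y x =
      ((Limits.colimit.ι D (Opposite.op (Opposite.op l))).app Y) ((D.map w).app Y x) := by
    rw [← ModuleCat.comp_apply, ← NatTrans.comp_app, Limits.colimit.w]
  rw [hπ] at e2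
  rw [e2]
  have e3 := congrArg ((Limits.colimit.ι D (Opposite.op (Opposite.op l))).app Y) e1
  exact (map_smul _ _ _).symm.trans (e3.trans (map_zero _))

theorem lc_vanish [IsNoetherianRing R] (q : PrimeSpectrum R) (I : Ideal R) (n : ℕ) (Y : ModuleCat.{u} R)
    (H : ∀ k, ∃ l, ∃ (_ : k ≤ l), ∃ J : Ideal R, I ^ l ≤ J ∧ (∃ s ∉ q.asIdeal, ∀ x ∈ J, s * x ∈ I ^ k) ∧
      PD (Localization.AtPrime q.asIdeal) (LocalizedModule q.asIdeal.primeCompl (R ⧸ J)) n) :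
    q ∉ Module.support R ((localCohomology I (n+1)).obj Y) := by
  rw [Module.mem_support_iff']
  rintro ⟨h, hh⟩
  let D := localCohomology.diagram (localCohomology.idealPowersDiagram I) (n+1)
  have hc := Limits.isColimitOfPreserves ((evaluation (ModuleCat.{u} R) (ModuleCat.{u} R)).obj Y) (Limits.colimit.isColimit D)
  obtain ⟨s, hs, h0⟩ := colim_tors q.asIdeal hc (fun j x => by
    obtain ⟨⟨k⟩⟩ := j
    exact lc_aux q I n Y H k x) h
  exact hh s hs h0
end
end SuppLC

namespace SuppLC

section
variable {R : Type u} [CommRing R]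

lemma PD_locquot (q : Ideal R) [q.IsPrime] (K : Ideal (Localization.AtPrime q)) {n : ℕ}
    (h : PD (Localization.AtPrime q) (Localization.AtPrime q ⧸ K) n) :
    PD (Localization.AtPrime q) (LocalizedModule q.primeCompl (R ⧸ K.comap (algebraMap R (Localization.AtPrime q)))) n := by
  let S := Localization.AtPrime q
  let J : Ideal R := K.comap (algebraMap R S)
  let g := J.toLocalizedQuotient' S q.primeCompl (Algebra.linearMap R S)
  have hJ : Submodule.localized' S q.primeCompl (Algebra.linearMap R S) J = K := by
    rw [Ideal.localized'_eq_map]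
    exact IsLocalization.map_comap q.primeCompl S K
  have h' : PD S (S ⧸ Submodule.localized' S q.primeCompl (Algebra.linearMap R S) J) n := by
    rw [hJ]; exact h
  exact PD_equiv ((IsLocalizedModule.iso q.primeCompl g).extendScalarsOfIsLocalization q.primeCompl S).symm h'

lemma exists_common (q : Ideal R) [q.IsPrime] (I : Ideal R) (t : Finset R) (h : ∀ x ∈ t, ∃ s ∉ q, s * x ∈ I) :
    ∃ s ∉ q, ∀ x ∈ Ideal.span (t : Set R), s * x ∈ I := by
  classical
  suffices H : ∃ s ∉ q, ∀ x ∈ t, s * x ∈ I by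
    obtain ⟨s, hs, hx⟩ := H
    refine ⟨s, hs, fun x hxs => ?_⟩
    induction hxs using Submodule.span_induction with
    | mem x h => exact hx x h
    | zero => simp
    | add x y _ _ h1 h2 => rw [mul_add]; exact I.add_mem h1 h2
    | smul a x _ h1 => rw [smul_eq_mul, mul_left_comm]; exact I.mul_mem_left _ h1
  induction t using Finset.induction_on with
  | empty => exact ⟨1, q.primeCompl.one_mem, by simp⟩
  | insert a t _ ih =>
    obtain ⟨s, hs, h1⟩ := ih (fun x hx => h x (Finset.mem_insert_of_mem hx))
    obtain ⟨s', hs', h2⟩ := h a (Finset.mem_insert_self _ _)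
    refine ⟨s * s', q.primeCompl.mul_mem hs hs', fun x hx => ?_⟩
    rcases Finset.mem_insert.1 hx with rfl | hx
    · rw [mul_assoc]; exact I.mul_mem_left _ h2
    · rw [mul_comm s, mul_assoc]; exact I.mul_mem_left _ (h1 x hx)

lemma exists_coheight_one {S : Type u} [CommRing S] [IsLocalRing S] [IsNoetherianRing S] (p : Ideal S) (hp : p.IsPrime)
    (hpm : p ≠ maximalIdeal S) : ∃ P : Ideal S, P.IsPrime ∧ p ≤ P ∧ P ≠ maximalIdeal S ∧
      ∀ Q : Ideal S, Q.IsPrime → P ≤ Q → Q = P ∨ Q = maximalIdeal S := by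
  obtain ⟨P, ⟨h1, h2, h3⟩, hP⟩ := set_has_maximal_iff_noetherian.2 (inferInstance : IsNoetherian S S)
    {Q : Ideal S | Q.IsPrime ∧ p ≤ Q ∧ Q ≠ maximalIdeal S} ⟨p, hp, le_rfl, hpm⟩
  refine ⟨P, h1, h2, h3, fun Q hQ hPQ => ?_⟩
  by_contra hcon
  push Not at hcon
  exact hP Q ⟨hQ, h2.trans hPQ, hcon.2⟩ (lt_of_le_of_ne hPQ hcon.1.symm)

theorem lc_zero [IsRegularLocalRing R] (I : Ideal R) (q : PrimeSpectrum R) (p : Ideal R) (hp : p.IsPrime) (hIp : I ≤ p)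
    (hpq : p < q.asIdeal) (n : ℕ) (hn : ringKrullDim (Localization.AtPrime q.asIdeal) ≤ ((n + 1 : ℕ) : WithBot ℕ∞))
    (Y : ModuleCat.{u} R) : q ∉ Module.support R ((localCohomology I (n+1)).obj Y) := by
  apply lc_vanish
  intro k
  let S := Localization.AtPrime q.asIdeal
  have hreg : IsRegularLocalRing S := reg_loc q.asIdeal
  obtain ⟨M, hM⟩ := exists_dim S
  have hMn : M ≤ n + 1 := by
    have : ((M : ℕ) : WithBot ℕ∞) ≤ ((n + 1 : ℕ) : WithBot ℕ∞) := hM ▸ hn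
    exact_mod_cast this
  have hdis : Disjoint (q.asIdeal.primeCompl : Set R) (p : Set R) := by
    rw [Set.disjoint_left]
    intro x hx hx'
    exact hx (hpq.le hx')
  have hpS : (p.map (algebraMap R S)).IsPrime := IsLocalization.isPrime_of_isPrime_disjoint q.asIdeal.primeCompl S p hp hdis
  have hcm := IsLocalization.comap_map_of_isPrime_disjoint q.asIdeal.primeCompl S hp hdis
  have hne : p.map (algebraMap R S) ≠ maximalIdeal S := by
    intro h
    rw [h] at hcm
    have := IsLocalization.AtPrime.comap_maximalIdeal S q.asIdeal
    exact hpq.ne (hcm.symm.trans this)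
  obtain ⟨P, hP, hpP, hPm, hmax⟩ := exists_coheight_one _ hpS hne
  obtain ⟨l, hkl, hl⟩ := sat_pow_le (I.map (algebraMap R S)) P ((Ideal.map_mono hIp).trans hpP) hPm hmax k
  refine ⟨l, hkl, (sat (I.map (algebraMap R S) ^ l)).comap (algebraMap R S), ?_, ?_, ?_⟩
  · rw [← Ideal.map_le_iff_le_comap, Ideal.map_pow]
    exact le_sat _
  · have hfg : ((sat (I.map (algebraMap R S) ^ l)).comap (algebraMap R S)).FG := IsNoetherian.noetherian _
    obtain ⟨t, ht⟩ := hfg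
    rw [← ht]
    apply exists_common
    intro x hx
    have h1 : x ∈ (sat (I.map (algebraMap R S) ^ l)).comap (algebraMap R S) := by
      rw [← ht]; exact Submodule.subset_span hx
    have h2 := hl h1
    rw [← Ideal.map_pow, IsLocalization.algebraMap_mem_map_algebraMap_iff q.asIdeal.primeCompl] at h2
    obtain ⟨s, hs, h3⟩ := h2
    exact ⟨s, hs, h3⟩
  · exact PD_locquot _ _ (PD_mono (by omega) (PD_sat hM _))
end
end SuppLC

namespace SuppLC
section
variable {R : Type u} [CommRing R]

lemma lc_notle [IsNoetherianRing R] (I : Ideal R) (q : PrimeSpectrum R) (h : ¬ I ≤ q.asIdeal) (n : ℕ)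
    (Y : ModuleCat.{u} R) : q ∉ Module.support R ((localCohomology I (n+1)).obj Y) := by
  apply lc_vanish
  intro k
  obtain ⟨a, ha, haq⟩ := SetLike.not_le_iff_exists.1 h
  refine ⟨k, le_rfl, ⊤, le_top, ⟨a ^ k, fun hk => haq (q.2.mem_of_pow_mem k hk), fun x _ =>
    Ideal.mul_mem_right _ _ (Ideal.pow_mem_pow ha k)⟩, ?_⟩
  haveI : Subsingleton (R ⧸ (⊤ : Ideal R)) := Ideal.Quotient.subsingleton_iff.2 rfl
  haveI : Subsingleton (LocalizedModule q.asIdeal.primeCompl (R ⧸ (⊤ : Ideal R))) := inferInstance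
  exact PD_subsing _

lemma dim_quot (q : PrimeSpectrum R) : ringKrullDim (R ⧸ q.asIdeal) = (Order.coheight q : ℕ∞) := by
  rw [ringKrullDim_quotient, Order.coheight_eq_krullDim_Ici]
  have : PrimeSpectrum.zeroLocus (q.asIdeal : Set R) = Set.Ici q := by
    ext x; simp
  rw [this]

lemma ht_add (q : PrimeSpectrum R) (n : ℕ) (hn : ringKrullDim R = (n : ℕ)) :
    Order.height q + Order.coheight q ≤ (n : ℕ∞) := by
  haveI : Nonempty (PrimeSpectrum R) := ⟨q⟩
  rw [ringKrullDim, Order.krullDim_eq_iSup_height_add_coheight_of_nonempty] at hn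
  have hn' : (⨆ a : PrimeSpectrum R, Order.height a + Order.coheight a) = (n : ℕ∞) := by exact_mod_cast hn
  rw [← hn']
  exact le_iSup (fun a : PrimeSpectrum R => Order.height a + Order.coheight a) q

lemma supp_coheight [IsRegularLocalRing R] (n : ℕ) (hdim : ringKrullDim R = (n : ℕ))
    (I : Ideal R) (d : ℕ) (hdn : d ≤ n)
    (hequi : ∀ p ∈ I.minimalPrimes, ringKrullDim (R ⧸ p) = (d : ℕ))
    (i : ℕ) (hid : i < d) (Y : ModuleCat.{u} R) (q : PrimeSpectrum R)
    (hq : q ∈ Module.support R ((localCohomology I (n - i)).obj Y)) : Order.coheight q < (i : ℕ∞) := by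
  by_contra hcon
  rw [not_lt] at hcon
  obtain ⟨m, hm⟩ : ∃ m, n - i = m + 1 := ⟨n - i - 1, by omega⟩
  rw [hm] at hq
  have hIq : I ≤ q.asIdeal := by
    by_contra h
    exact lc_notle I q h m Y hq
  obtain ⟨p0, hp0, hpq⟩ := Ideal.exists_minimalPrimes_le hIq
  have key : ∀ q' : PrimeSpectrum R, p0 < q'.asIdeal → (i : ℕ∞) ≤ Order.coheight q' →
      q' ∈ Module.support R ((localCohomology I (m + 1)).obj Y) → False := by
    intro q' h1 h2 h3
    refine lc_zero I q' p0 hp0.1.1 hp0.1.2 h1 m ?_ Y h3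
    rw [IsLocalization.AtPrime.ringKrullDim_eq_height q'.asIdeal, PrimeSpectrum.height_eq_orderHeight]
    have h4 := ht_add q' n hdim
    have h5 : Order.height q' + (i : ℕ∞) ≤ (n : ℕ∞) := le_trans (by gcongr) h4
    have h6 : Order.height q' ≠ ⊤ := by
      intro h; rw [h] at h5; simp at h5
    lift Order.height q' to ℕ using h6 with a
    have h7 : a + i ≤ n := by exact_mod_cast h5
    exact_mod_cast (by omega : a ≤ m + 1)
  rcases hpq.lt_or_eq with h | h
  · exact key q h hcon hq
  · have h1 := hequi p0 hp0
    rw [h, dim_quot] at h1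
    have h2 : Order.coheight q = (d : ℕ∞) := by exact_mod_cast h1
    obtain ⟨q', hq', hc⟩ := (Order.coe_lt_coheight_iff (x := q) (n := i) (by rw [h2]; exact ENat.coe_lt_top d)).1
      (by rw [h2]; exact_mod_cast hid)
    exact key q' (by rw [h]; exact hq') hc.ge (Module.mem_support_mono hq'.le hq)

lemma exists_min [IsNoetherianRing R] (s : Set (PrimeSpectrum R)) (p : PrimeSpectrum R) (hp : p ∈ s) :
    ∃ q ≤ p, Minimal (· ∈ s) q := by
  have hw : WellFounded (InvImage (· < ·) (fun q : PrimeSpectrum R => Order.height q)) :=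
    InvImage.wf _ wellFounded_lt
  let t : Set (PrimeSpectrum R) := {q | q ≤ p ∧ q ∈ s}
  obtain ⟨q, hq, hmin⟩ := hw.has_min t ⟨p, le_rfl, hp⟩
  refine ⟨q, hq.1, hq.2, fun q' hq' hle => ?_⟩
  by_contra hcon
  have hlt : q' < q := lt_of_le_not_ge hle hcon
  refine hmin q' ⟨hle.trans hq.1, hq'⟩ (Order.height_strictMono hlt ?_)
  refine lt_of_le_of_lt (Order.height_mono hle) ?_
  rw [← PrimeSpectrum.height_eq_orderHeight]
  exact Ideal.height_lt_top q.2.ne_top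

end
end SuppLC

open SuppLC
theorem support_torsion_localCohomology_dim_le
    (R : Type u) [CommRing R] [IsLocalRing R] [IsNoetherianRing R]
    (n : ℕ) (hdim : ringKrullDim R = (n : ℕ))
    (hreg : ∃ s : Finset R, Ideal.span (s : Set R) = maximalIdeal R ∧ s.card = n)
    (I : Ideal R) (d : ℕ) (hd : 2 ≤ d)
    (hdimI : ringKrullDim (R ⧸ I) = (d : ℕ))
    (hequi : ∀ p ∈ I.minimalPrimes, ringKrullDim (R ⧸ p) = (d : ℕ))
    (i : ℕ) (hi1 : 1 ≤ i) (hid : i ≤ d - 1)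
    (r : R) (hr : r ∈ maximalIdeal R)
    (hrmin : Module.support R ((localCohomology I (n - i)).obj (ModuleCat.of R R)) ≠
        {closedPoint R} →
      ∀ q, Minimal (· ∈ Module.support R
          ((localCohomology I (n - i)).obj (ModuleCat.of R R))) q →
        r ∉ q.asIdeal) :
    ∀ p ∈ Module.support R
        (⨆ k : ℕ, Submodule.torsionBy R
          ((localCohomology I (n - i)).obj (ModuleCat.of R R)) (r ^ k) :
          Submodule R ((localCohomology I (n - i)).obj (ModuleCat.of R R))),
      ringKrullDim (R ⧸ p.asIdeal) ≤ ((max 0 (i - 2) : ℕ) : ℕ) := by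
  intro p hp
  obtain ⟨s, hs, hc⟩ := hreg
  haveI : IsRegularLocalRing R := (reg_of_gens hdim.ge s hs hc.le).1
  have hdn : d ≤ n := by
    have := ringKrullDim_quotient_le I
    rw [hdim, hdimI] at this
    exact_mod_cast this
  have hpH := Module.support_subset_of_injective (Submodule.subtype _) (Submodule.subtype_injective _) hp
  by_cases hsupp : Module.support R ((localCohomology I (n - i)).obj (ModuleCat.of R R)) = {closedPoint R}
  · rw [hsupp] at hpH
    have : p = closedPoint R := hpH
    rw [this]
    have h0 : ringKrullDim (R ⧸ (closedPoint R).asIdeal) = 0 := by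
      haveI : (closedPoint R).asIdeal.IsMaximal := inferInstanceAs (maximalIdeal R).IsMaximal
      letI := Ideal.Quotient.field (closedPoint R).asIdeal
      exact ringKrullDim_eq_zero_of_field _
    rw [h0]
    exact_mod_cast Nat.zero_le _
  · have hrp : r ∈ p.asIdeal := by
      rw [Module.mem_support_iff'] at hp
      obtain ⟨⟨m, hm⟩, hmp⟩ := hp
      have hdir : Directed (· ≤ ·) (fun k : ℕ => Submodule.torsionBy R
          ((localCohomology I (n - i)).obj (ModuleCat.of R R)) (r ^ k)) := by
        refine Monotone.directed_le fun a b hab => ?_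
        exact Submodule.torsionBy_le_torsionBy_of_dvd _ _ (pow_dvd_pow r hab)
      obtain ⟨k, hk⟩ := (Submodule.mem_iSup_of_directed _ hdir).1 hm
      by_contra hcon
      refine hmp (r ^ k) (fun h => hcon (p.2.mem_of_pow_mem k h)) ?_
      exact Subtype.ext ((Submodule.mem_torsionBy_iff _ _).1 hk)
    obtain ⟨q, hqp, hq⟩ := exists_min _ p hpH
    have hrq := hrmin hsupp q hq
    have hlt : q < p := lt_of_le_of_ne hqp (fun h => hrq (h ▸ hrp))
    have h1 := Order.coheight_add_one_le hlt
    have h2 := supp_coheight n hdim I d hdn hequi i (by omega) _ q hq.1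
    rw [dim_quot]
    have h3 := lt_of_le_of_lt h1 h2
    have h4 : Order.coheight p ≠ ⊤ := by
      intro h; rw [h] at h3; simp at h3
    lift Order.coheight p to ℕ using h4 with a
    have h5 : a + 1 < i := by exact_mod_cast h3
    exact_mod_cast (by omega : a ≤ max 0 (i - 2))
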